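/- Let n ≥ 4 and let L be a Cartan type Lie superalgebra over ℂ, i.e. one of W(n), S(n), S̃(n) (n even), or H(n) (n > 4). Then every superderivation of L is inner in the extended algebra L': Der L = ad L', where L' = L if L = W(n) or S̃(n), L' = S(n) ⊕ ℂ𝒞 if L = S(n), and L' = H̃(n) ⊕ ℂ𝒞 if L = H(n). -/

import Mathlib

open scoped BigOperators

noncomputable section

namespace CartanSuper

/-- Coordinates of the exterior algebra `Λ(n)` with respect to the monomial basis
`{x_S : S ⊆ {1,…,n}}`. -/
abbrev Lambda (n : ℕ) := Finset (Fin n) → ℂ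

/-- Endomorphism algebra of `Λ(n)`. -/
abbrev E (n : ℕ) := Module.End ℂ (Lambda n)

variable (n : ℕ)

/-- `(−1)^k`. -/
def msign (k : ℕ) : ℂ := (-1 : ℂ) ^ k

/-- The basis monomial `x_S = x_{i₁}⋯x_{i_k}` (indices in increasing order). -/
def mono (S : Finset (Fin n)) : Lambda n := fun T => if T = S then 1 else 0

/-- Number of inversions between `S` and `T`. -/
def inversions (S T : Finset (Fin n)) : ℕ := ((S ×ˢ T).filter fun p => p.2 < p.1).card

/-- The multiplication of `Λ(n)` in coordinates:
`x_S · x_T = (−1)^{inversions} x_{S ∪ T}` for disjoint `S, T` and `0` otherwise. -/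
def lmulFun (f g : Lambda n) : Lambda n :=
  fun U => ∑ S ∈ U.powerset, msign (inversions n S (U \ S)) * f S * g (U \ S)

/-- Left multiplication by an element of `Λ(n)`, as a linear map `Λ(n) →ₗ End Λ(n)`. -/
def mulOp : Lambda n →ₗ[ℂ] E n where
  toFun f :=
    { toFun := lmulFun n f
      map_add' := by
        intro g h; funext U
        simp [lmulFun, mul_add, Finset.sum_add_distrib]
      map_smul' := by
        intro c g; funext U
        simp only [lmulFun, Pi.smul_apply, smul_eq_mul, RingHom.id_apply, Finset.mul_sum]
        exact Finset.sum_congr rfl (by intros; ring) }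
  map_add' := by
    intro f g; apply LinearMap.ext; intro h; funext U
    show lmulFun n (f + g) h U = lmulFun n f h U + lmulFun n g h U
    simp only [lmulFun]
    rw [← Finset.sum_add_distrib]
    exact Finset.sum_congr rfl (by intros; simp [Pi.add_apply]; ring)
  map_smul' := by
    intro c f; apply LinearMap.ext; intro h; funext U
    show lmulFun n (c • f) h U = (c • lmulFun n f h) U
    simp only [lmulFun, Pi.smul_apply, smul_eq_mul, Finset.mul_sum]
    exact Finset.sum_congr rfl (by intros; ring)

/-- The superderivation `∂_i` of `Λ(n)`, in coordinates. -/
def pd (i : Fin n) : E n where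
  toFun f := fun S =>
    if i ∈ S then 0 else msign (S.filter (· < i)).card * f (insert i S)
  map_add' := by
    intro f g; funext S; by_cases h : i ∈ S <;> simp [h, mul_add]
  map_smul' := by
    intro c f; funext S; by_cases h : i ∈ S <;> simp [h] <;> ring

/-- The parity operator `σ` of `Λ(n)`: `σ(x_S) = (−1)^{|S|} x_S`. -/
def par : E n where
  toFun f := fun S => msign S.card * f S
  map_add' := by intro f g; funext S; simp [mul_add]
  map_smul' := by intro c f; funext S; simp; ring

/-- The super-commutator `[D,F] = D∘F − (−1)^{|D||F|} F∘D`, extended bilinearly to all of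
`End Λ(n)` using the parity operator `σ`
(for homogeneous `D`, `σ∘D∘σ = (−1)^{|D|} D`). -/
def sbFun (D F : E n) : E n :=
  D * F - (2:ℂ)⁻¹ • ((F + par n * F * par n) * D + (F - par n * F * par n) * (par n * D * par n))

/-- The super-commutator as a bilinear map. -/
def sbL : E n →ₗ[ℂ] E n →ₗ[ℂ] E n :=
  LinearMap.mk₂ ℂ (sbFun n)
    (fun D D' F => by
      simp only [sbFun, add_mul, sub_mul, mul_add, mul_sub, smul_mul_assoc, mul_smul_comm,
        smul_add, smul_sub]
      module)
    (fun c D F => by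
      simp only [sbFun, add_mul, sub_mul, mul_add, mul_sub, smul_mul_assoc, mul_smul_comm,
        smul_add, smul_sub]
      module)
    (fun D F F' => by
      simp only [sbFun, add_mul, sub_mul, mul_add, mul_sub, smul_mul_assoc, mul_smul_comm,
        smul_add, smul_sub]
      module)
    (fun c D F => by
      simp only [sbFun, add_mul, sub_mul, mul_add, mul_sub, smul_mul_assoc, mul_smul_comm,
        smul_add, smul_sub]
      module)

/-- Shorthand for the super-commutator. -/
def sb (D F : E n) : E n := sbL n D F

/-- The ℤ₂-homogeneous component of `Λ(n)` of parity `p`. -/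
def lpar (p : ZMod 2) : Submodule ℂ (Lambda n) where
  carrier := {f | ∀ S : Finset (Fin n), (S.card : ZMod 2) ≠ p → f S = 0}
  add_mem' := by intro f g hf hg S hS; simp [Pi.add_apply, hf S hS, hg S hS]
  zero_mem' := by intro S hS; rfl
  smul_mem' := by intro c f hf S hS; simp [Pi.smul_apply, hf S hS]

/-- The ℤ-homogeneous component of `Λ(n)` of degree `m` (zero unless `0 ≤ m ≤ n`). -/
def ldeg (m : ℤ) : Submodule ℂ (Lambda n) where
  carrier := {f | ∀ S : Finset (Fin n), (S.card : ℤ) ≠ m → f S = 0}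
  add_mem' := by intro f g hf hg S hS; simp [Pi.add_apply, hf S hS, hg S hS]
  zero_mem' := by intro S hS; rfl
  smul_mem' := by intro c f hf S hS; simp [Pi.smul_apply, hf S hS]

/-- Endomorphisms of `Λ(n)` that are ℤ₂-homogeneous of parity `p`. -/
def epar (p : ZMod 2) : Submodule ℂ (E n) where
  carrier := {D | ∀ (q : ZMod 2), ∀ f ∈ lpar n q, D f ∈ lpar n (q + p)}
  add_mem' := by
    intro D F hD hF q f hf
    simpa [LinearMap.add_apply] using (lpar n (q + p)).add_mem (hD q f hf) (hF q f hf)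
  zero_mem' := by intro q f hf; simpa using (lpar n (q + p)).zero_mem
  smul_mem' := by
    intro c D hD q f hf
    simpa [LinearMap.smul_apply] using (lpar n (q + p)).smul_mem c (hD q f hf)

/-- Endomorphisms of `Λ(n)` that are ℤ-homogeneous of degree `d`. -/
def edeg (d : ℤ) : Submodule ℂ (E n) where
  carrier := {D | ∀ (m : ℤ), ∀ f ∈ ldeg n m, D f ∈ ldeg n (m + d)}
  add_mem' := by
    intro D F hD hF m f hf
    simpa [LinearMap.add_apply] using (ldeg n (m + d)).add_mem (hD m f hf) (hF m f hf)
  zero_mem' := by intro m f hf; simpa using (ldeg n (m + d)).zero_mem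
  smul_mem' := by
    intro c D hD m f hf
    simpa [LinearMap.smul_apply] using (ldeg n (m + d)).smul_mem c (hD m f hf)

/-- The linear map `(f₁,…,f_n) ↦ ∑ᵢ fᵢ ∂ᵢ`. -/
def Wmap : (Fin n → Lambda n) →ₗ[ℂ] E n where
  toFun F := ∑ i, mulOp n (F i) * pd n i
  map_add' := by
    intro F G
    simp only [Pi.add_apply, map_add, add_mul, Finset.sum_add_distrib]
  map_smul' := by
    intro c F
    simp only [RingHom.id_apply, Pi.smul_apply, map_smul, smul_mul_assoc, Finset.smul_sum]

/-- The divergence `(f₁,…,f_n) ↦ ∑ᵢ ∂ᵢ(fᵢ)`. -/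
def divMap : (Fin n → Lambda n) →ₗ[ℂ] Lambda n where
  toFun F := ∑ i, pd n i (F i)
  map_add' := by
    intro F G
    simp only [Pi.add_apply, map_add, Finset.sum_add_distrib]
  map_smul' := by
    intro c F
    simp only [RingHom.id_apply, Pi.smul_apply, map_smul, Finset.smul_sum]

/-- The Witt type Lie superalgebra `W(n) = {∑ fᵢ∂ᵢ : fᵢ ∈ Λ(n)}`. -/
def Wn : Submodule ℂ (E n) := LinearMap.range (Wmap n)

/-- Divergence-free coefficient tuples. -/
def divFree : Submodule ℂ (Fin n → Lambda n) := LinearMap.ker (divMap n)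

/-- The special type Lie superalgebra `S(n) = {∑ fᵢ∂ᵢ : ∑ ∂ᵢ(fᵢ) = 0}`. -/
def Sn : Submodule ℂ (E n) := (divFree n).map (Wmap n)

/-- The top monomial `ω = x₁x₂⋯x_n`. -/
def omegaTop : Lambda n := mono n Finset.univ

/-- `1 − x₁x₂⋯x_n`. -/
def oneM : Lambda n := mono n ∅ - omegaTop n

/-- Multiplication of every coefficient by `1 − x₁⋯x_n`. -/
def oneMScale : (Fin n → Lambda n) →ₗ[ℂ] (Fin n → Lambda n) :=
  LinearMap.pi fun i => (mulOp n (oneM n)) ∘ₗ LinearMap.proj i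

/-- The Lie superalgebra `S̃(n) = {(1−x₁⋯x_n)∑ fᵢ∂ᵢ : ∑ ∂ᵢ(fᵢ) = 0}` (`n` even). -/
def Stn : Submodule ℂ (E n) := (divFree n).map (Wmap n ∘ₗ oneMScale n)

/-- The conjugate index `i'`. -/
def cidx (i : Fin n) : Fin n :=
  ⟨if i.val < n / 2 then i.val + n / 2 else if i.val < 2 * (n / 2) then i.val - n / 2 else i.val,
   by have := i.isLt; split_ifs <;> omega⟩

/-- The linear map `f ↦ D_H(f) = (−1)^{|f|} ∑ᵢ ∂ᵢ(f)∂_{i'}` (the sign is implemented by the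
parity operator `σ`, so that this is a single linear map agreeing with `D_H` on homogeneous
elements). -/
def DHmap : Lambda n →ₗ[ℂ] E n where
  toFun f := ∑ i, mulOp n (pd n i (par n f)) * pd n (cidx n i)
  map_add' := by
    intro f g
    simp only [map_add, add_mul, Finset.sum_add_distrib]
  map_smul' := by
    intro c f
    simp only [RingHom.id_apply, map_smul, smul_mul_assoc, Finset.smul_sum]

/-- Evaluation of the top coefficient. -/
def evalTop : Lambda n →ₗ[ℂ] ℂ := LinearMap.proj Finset.univ

/-- The Hamiltonian Lie superalgebra `H(n) = {D_H(f) : f ∈ ⊕_{i=0}^{n−1} Λ(n)_i}`. -/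
def Hn : Submodule ℂ (E n) := (LinearMap.ker (evalTop n)).map (DHmap n)

/-- `H̃(n) = {D_H(f) : f ∈ Λ(n)}`. -/
def HtN : Submodule ℂ (E n) := LinearMap.range (DHmap n)

/-- The degree derivation `𝒞 = ∑ᵢ xᵢ∂ᵢ`. -/
def CC : E n := ∑ i, mulOp n (mono n {i}) * pd n i

/-- The span of the diagonal elements `xᵢ∂ᵢ`. -/
def diagSpan : Submodule ℂ (E n) :=
  Submodule.span ℂ (Set.range fun i : Fin n => mulOp n (mono n {i}) * pd n i)

/-- The four families of Cartan type Lie superalgebras. -/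
inductive CT | W | S | St | H
deriving DecidableEq

/-- Validity of the parameter `n` for each family. -/
def CT.valid : CT → ℕ → Prop
  | .W, n => 4 ≤ n
  | .S, n => 4 ≤ n
  | .St, n => 4 ≤ n ∧ Even n
  | .H, n => 4 < n

/-- The Cartan type Lie superalgebra `L` itself. -/
def CT.algebra : CT → (n : ℕ) → Submodule ℂ (E n)
  | .W, n => Wn n
  | .S, n => Sn n
  | .St, n => Stn n
  | .H, n => Hn n

/-- The extended algebra `L'`: `L' = L` for `W(n)` and `S̃(n)`, `L' = S(n) ⊕ ℂ𝒞` for `S(n)`,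
and `L' = H̃(n) ⊕ ℂ𝒞` for `H(n)`. -/
def CT.prime : CT → (n : ℕ) → Submodule ℂ (E n)
  | .W, n => Wn n
  | .S, n => Sn n ⊔ Submodule.span ℂ {CC n}
  | .St, n => Stn n
  | .H, n => HtN n ⊔ Submodule.span ℂ {CC n}

/-- The top degree `ξ_L` of the ℤ-grading. -/
def CT.xi : CT → (n : ℕ) → ℤ
  | .W, n => (n : ℤ) - 1
  | .S, n => (n : ℤ) - 2
  | .St, n => (n : ℤ) - 2
  | .H, n => (n : ℤ) - 3

/-- The ℤ-grading component `L_j = L ∩ W(n)_j`; for `S̃(n)` the component of degree `−1`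
is `span{(1−x₁⋯x_n)∂ᵢ}` instead. -/
def CT.grade (t : CT) (n : ℕ) (j : ℤ) : Submodule ℂ (E n) :=
  match t with
  | .St =>
      if j = -1 then
        Submodule.span ℂ (Set.range fun i : Fin n => mulOp n (oneM n) * pd n i)
      else Stn n ⊓ edeg n j
  | t => t.algebra n ⊓ edeg n j

/-- The ℤ-grading component `L'_j` of the extended algebra `L'`. -/
def CT.grade' (t : CT) (n : ℕ) (j : ℤ) : Submodule ℂ (E n) :=
  match t with
  | .St => CT.grade .St n j
  | t => t.prime n ⊓ edeg n j

/-- The standard Cartan subalgebra `H_L` of `L`: the part of the diagonal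
`span{xᵢ∂ᵢ}` lying in `L`. -/
def CT.cartan (t : CT) (n : ℕ) : Submodule ℂ (E n) := t.algebra n ⊓ diagSpan n

/-- The weight space of `M ⊆ End Λ(n)` of weight `μ ∈ H_L^*` under the adjoint action
of the standard Cartan subalgebra of `L`. -/
def wtsp (t : CT) (n : ℕ) (M : Submodule ℂ (E n)) (μ : Module.Dual ℂ (t.cartan n)) :
    Submodule ℂ (E n) where
  carrier := {x | x ∈ M ∧ ∀ h : t.cartan n, sbL n h x = μ h • x}
  add_mem' := by
    rintro x y ⟨hx, hx'⟩ ⟨hy, hy'⟩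
    exact ⟨M.add_mem hx hy, fun h => by simp [map_add, hx' h, hy' h, smul_add]⟩
  zero_mem' := ⟨M.zero_mem, fun h => by simp⟩
  smul_mem' := by
    rintro c x ⟨hx, hx'⟩
    exact ⟨M.smul_mem c hx, fun h => by simp [map_smul, hx' h, smul_comm c]⟩

/-- The set of roots of `M` with respect to the standard Cartan subalgebra of `L`:
the nonzero weights with nonzero weight space. -/
def CT.roots (t : CT) (n : ℕ) (M : Submodule ℂ (E n)) : Set (Module.Dual ℂ (t.cartan n)) :=
  {ε | ε ≠ 0 ∧ wtsp t n M ε ≠ ⊥}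

/-- The sign `(−1)^p` for `p ∈ ℤ₂`. -/
def sgn (p : ZMod 2) : ℂ := (-1 : ℂ) ^ p.val

/-- `f` is a super-biderivation of `L` of ℤ₂-degree `pf`:
a bilinear map with `f(L_α, L_β) ⊆ L_{α+β+pf}` satisfying
`f([x,y],z) = (−1)^{|x||f|}[x,f(y,z)] + (−1)^{|y||z|}[f(x,z),y]` and
`f(x,[y,z]) = [f(x,y),z] + (−1)^{(|f|+|x|)|y|}[y,f(x,z)]` for homogeneous `x,y,z ∈ L`.
(The bilinear map is given as a bilinear map on the ambient space `End Λ(n)`;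
only its restriction to `L` is relevant.) -/
structure IsSuperBider (L : Submodule ℂ (E n)) (pf : ZMod 2)
    (f : E n →ₗ[ℂ] E n →ₗ[ℂ] E n) : Prop where
  maps : ∀ (α β : ZMod 2), ∀ x ∈ L ⊓ epar n α, ∀ y ∈ L ⊓ epar n β,
    f x y ∈ L ⊓ epar n (α + β + pf)
  eq1 : ∀ (α β γ : ZMod 2), ∀ x ∈ L ⊓ epar n α, ∀ y ∈ L ⊓ epar n β, ∀ z ∈ L ⊓ epar n γ,
    f (sbL n x y) z = sgn (α * pf) • sbL n x (f y z) + sgn (β * γ) • sbL n (f x z) y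
  eq2 : ∀ (α β γ : ZMod 2), ∀ x ∈ L ⊓ epar n α, ∀ y ∈ L ⊓ epar n β, ∀ z ∈ L ⊓ epar n γ,
    f x (sbL n y z) = sbL n (f x y) z + sgn ((pf + α) * β) • sbL n y (f x z)

/-- `D` is a superderivation of `L` of ℤ₂-degree `p`:
`D(L_α) ⊆ L_{α+p}` and `D([x,y]) = [D(x),y] + (−1)^{|D||x|}[x,D(y)]` for homogeneous
`x, y ∈ L`. (Given as a linear map on the ambient space `End Λ(n)`.) -/
structure IsSuperDer (L : Submodule ℂ (E n)) (p : ZMod 2)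
    (D : E n →ₗ[ℂ] E n) : Prop where
  maps : ∀ (α : ZMod 2), ∀ x ∈ L ⊓ epar n α, D x ∈ L ⊓ epar n (α + p)
  leib : ∀ (α β : ZMod 2), ∀ x ∈ L ⊓ epar n α, ∀ y ∈ L ⊓ epar n β,
    D (sbL n x y) = sbL n (D x) y + sgn (p * α) • sbL n x (D y)

/-- `f ∈ BDer(L)_ε`: the super-biderivation `f` has weight `ε ∈ H_L^*`, i.e.
`f(L_η, L_ζ) ⊆ L_{ε+η+ζ}` for all weights `η, ζ`. -/
def CT.HasWeight (t : CT) (n : ℕ) (f : E n →ₗ[ℂ] E n →ₗ[ℂ] E n)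
    (ε : Module.Dual ℂ (t.cartan n)) : Prop :=
  ∀ (η ζ : Module.Dual ℂ (t.cartan n)),
    ∀ x ∈ wtsp t n (t.algebra n) η, ∀ y ∈ wtsp t n (t.algebra n) ζ,
      f x y ∈ wtsp t n (t.algebra n) (ε + η + ζ)

/-- `f ∈ BDer(L)_i`: the super-biderivation `f` has ℤ-degree `i`, i.e.
`f(L_j, L_k) ⊆ L_{i+j+k}` for all `j, k ∈ ℤ`. -/
def CT.HasDeg (t : CT) (n : ℕ) (f : E n →ₗ[ℂ] E n →ₗ[ℂ] E n) (i : ℤ) : Prop :=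
  ∀ (j k : ℤ), ∀ x ∈ t.grade n j, ∀ y ∈ t.grade n k, f x y ∈ t.grade n (i + j + k)

section

/-! ### Basic facts on the exterior algebra -/

/-- Left multiplication by the generator `x_i`. -/
def XX (i : Fin n) : E n := mulOp n (mono n {i})

/-- The sign of moving `x_i` past the smaller elements of `U`. -/
def sg (i : Fin n) (U : Finset (Fin n)) : ℂ := msign (U.filter (· < i)).card

variable {n}

lemma eneg_mul (A B : E n) : -A * B = -(A * B) := neg_mul A B

lemma emul_neg (A B : E n) : A * -B = -(A * B) := mul_neg A B

lemma msign_sq (k : ℕ) : msign k * msign k = 1 := by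
  unfold msign; rw [← mul_pow]; norm_num

lemma msign_add (k l : ℕ) : msign (k + l) = msign k * msign l := pow_add _ _ _

lemma msign_succ (k : ℕ) : msign (k + 1) = - msign k := by
  unfold msign; rw [pow_succ]; ring

lemma msign_ne (k : ℕ) : msign k ≠ 0 := by
  unfold msign; exact pow_ne_zero _ (by norm_num)

lemma sg_sq (i : Fin n) (U : Finset (Fin n)) : sg n i U * sg n i U = 1 := msign_sq _

lemma sg_ne (i : Fin n) (U : Finset (Fin n)) : sg n i U ≠ 0 := msign_ne _

lemma sg_insert_self (i : Fin n) (U : Finset (Fin n)) : sg n i (insert i U) = sg n i U := by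
  unfold sg; congr 2; ext x; simp only [Finset.mem_filter, Finset.mem_insert]; grind

lemma sg_erase_self (i : Fin n) (U : Finset (Fin n)) : sg n i (U.erase i) = sg n i U := by
  unfold sg; congr 2; ext x; simp only [Finset.mem_filter, Finset.mem_erase]; grind

lemma sg_insert (i j : Fin n) (U : Finset (Fin n)) (h : j ∉ U) :
    sg n i (insert j U) = if j < i then - sg n i U else sg n i U := by
  unfold sg
  rw [Finset.filter_insert]
  split_ifs with h1
  · rw [Finset.card_insert_of_notMem (by simp [h]), msign_succ]
  · rfl

lemma sg_erase (i j : Fin n) (U : Finset (Fin n)) (h : j ∈ U) :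
    sg n i (U.erase j) = if j < i then - sg n i U else sg n i U := by
  have := sg_insert i j (U.erase j) (by simp)
  rw [Finset.insert_erase h] at this
  split_ifs at this ⊢ <;> rw [this] <;> simp

lemma mono_apply (S T : Finset (Fin n)) : mono n S T = if T = S then 1 else 0 := rfl

lemma lam_eq_sum (f : Lambda n) : f = ∑ S, f S • mono n S := by
  funext T
  simp [mono_apply, Finset.sum_apply]

lemma E_ext {A B : E n} (h : ∀ S, A (mono n S) = B (mono n S)) : A = B := by
  apply LinearMap.ext; intro f
  rw [lam_eq_sum f]; simp [h]

lemma pd_apply (i : Fin n) (f : Lambda n) (S : Finset (Fin n)) :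
    pd n i f S = if i ∈ S then 0 else sg n i S * f (insert i S) := rfl

lemma par_apply (f : Lambda n) (S : Finset (Fin n)) :
    par n f S = msign S.card * f S := rfl

lemma mulOp_apply (f g : Lambda n) (U : Finset (Fin n)) :
    mulOp n f g U = ∑ S ∈ U.powerset, msign (inversions n S (U \ S)) * f S * g (U \ S) := rfl

lemma XX_apply (i : Fin n) (f : Lambda n) (U : Finset (Fin n)) :
    XX n i f U = if i ∈ U then sg n i U * f (U.erase i) else 0 := by
  unfold XX
  rw [mulOp_apply]
  split_ifs with h
  · rw [Finset.sum_eq_single {i}]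
    · rw [mono_apply, if_pos rfl, mul_one, Finset.sdiff_singleton_eq_erase, ← sg_erase_self]
      congr 2
      unfold inversions
      rw [Finset.card_filter, Finset.sum_product, Finset.sum_singleton, ← Finset.card_filter]
    · intro S _ hS; rw [mono_apply, if_neg hS]; ring
    · intro hS; exact absurd (by simpa using h) hS
  · apply Finset.sum_eq_zero
    intro S hS
    rw [mono_apply, if_neg]
    · ring
    · rintro rfl; exact h (by simpa using hS)

lemma mono_insert (i : Fin n) (S : Finset (Fin n)) (h : i ∉ S) :
    mono n (insert i S) = sg n i S • XX n i (mono n S) := by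
  funext U
  simp only [Pi.smul_apply, smul_eq_mul, XX_apply, mono_apply]
  by_cases hU : U = insert i S
  · subst hU
    simp only [if_true, Finset.mem_insert_self, sg_insert_self, Finset.erase_insert h, mul_one,
      sg_sq]
  · rw [if_neg hU]
    split_ifs with h1 h2
    · exact absurd (by rw [← h2, Finset.insert_erase h1]) hU
    · ring
    · ring

lemma XX_mono (i : Fin n) (S : Finset (Fin n)) (h : i ∉ S) :
    XX n i (mono n S) = sg n i S • mono n (insert i S) := by
  rw [mono_insert i S h, smul_smul, sg_sq, one_smul]

lemma XX_mono_mem (i : Fin n) (S : Finset (Fin n)) (h : i ∈ S) :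
    XX n i (mono n S) = 0 := by
  funext U
  simp only [XX_apply, mono_apply, Pi.zero_apply]
  split_ifs with h1 h2
  · exfalso; rw [← h2] at h; simp at h
  · ring
  · rfl

lemma pd_mono (i : Fin n) (S : Finset (Fin n)) (h : i ∈ S) :
    pd n i (mono n S) = sg n i S • mono n (S.erase i) := by
  funext U
  simp only [pd_apply, mono_apply, Pi.smul_apply, smul_eq_mul]
  by_cases hU : U = S.erase i
  · subst hU
    simp [Finset.insert_erase h, sg_erase_self]
  · rw [if_neg hU]
    split_ifs with h1 h2
    · ring
    · exact absurd (by rw [← h2, Finset.erase_insert h1]) hU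
    · ring

lemma pd_mono_notMem (i : Fin n) (S : Finset (Fin n)) (h : i ∉ S) :
    pd n i (mono n S) = 0 := by
  funext U
  simp only [pd_apply, mono_apply, Pi.zero_apply]
  split_ifs with h1 h2
  · rfl
  · exfalso; rw [← h2] at h; simp at h
  · ring

lemma par_mono (S : Finset (Fin n)) : par n (mono n S) = msign S.card • mono n S := by
  funext U
  simp only [par_apply, mono_apply, Pi.smul_apply, smul_eq_mul]
  split_ifs with h
  · rw [h]
  · ring

lemma lam_induct {P : Lambda n → Prop} (h1 : P (mono n ∅))
    (hadd : ∀ f g, P f → P g → P (f + g)) (hsmul : ∀ (c : ℂ) f, P f → P (c • f))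
    (hX : ∀ i f, P f → P (XX n i f)) (f : Lambda n) : P f := by
  have hm : ∀ S, P (mono n S) := by
    intro S
    induction S using Finset.induction_on with
    | empty => exact h1
    | insert i S hi ih => rw [mono_insert i S hi]; exact hsmul _ _ (hX _ _ ih)
  rw [lam_eq_sum f]
  have h0 : P 0 := by simpa using hsmul 0 _ h1
  exact Finset.sum_induction _ P hadd h0 (fun S _ => hsmul _ _ (hm S))

/-! Canonical anticommutation relations. -/

lemma XX_anti (i j : Fin n) : XX n i * XX n j = - (XX n j * XX n i) := by
  apply LinearMap.ext; intro f; funext U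
  simp only [Module.End.mul_apply, LinearMap.neg_apply, Pi.neg_apply, XX_apply, Finset.mem_erase]
  rcases eq_or_ne i j with rfl | hij
  · simp
  by_cases hi : i ∈ U <;> by_cases hj : j ∈ U <;> simp only [hi, hj, hij, hij.symm, ne_eq,
    not_false_eq_true, and_true, and_false, if_true, if_false, mul_zero, neg_zero]
  rw [sg_erase i j U hj, sg_erase j i U hi, Finset.erase_right_comm]
  rcases lt_or_gt_of_ne hij with h | h
  · simp only [h, not_lt_of_gt h, if_true, if_false]; ring
  · simp only [h, not_lt_of_gt h, if_true, if_false]; ring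

lemma pd_anti (i j : Fin n) : pd n i * pd n j = - (pd n j * pd n i) := by
  apply LinearMap.ext; intro f; funext U
  simp only [Module.End.mul_apply, LinearMap.neg_apply, Pi.neg_apply, pd_apply, Finset.mem_insert]
  rcases eq_or_ne i j with rfl | hij
  · simp
  by_cases hi : i ∈ U <;> by_cases hj : j ∈ U <;> simp only [hi, hj, hij, hij.symm, 
    or_true, or_false, if_true, if_false, mul_zero, neg_zero]
  rw [sg_insert i j U hj, sg_insert j i U hi, Finset.insert_comm]
  rcases lt_or_gt_of_ne hij with h | h
  · simp only [h, not_lt_of_gt h, if_true, if_false]; ring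
  · simp only [h, not_lt_of_gt h, if_true, if_false]; ring

lemma pd_XX (i j : Fin n) : pd n i * XX n j = (if i = j then 1 else 0) - XX n j * pd n i := by
  apply LinearMap.ext; intro f; funext U
  rcases eq_or_ne i j with rfl | hij
  · simp only [Module.End.mul_apply, LinearMap.sub_apply, Pi.sub_apply, pd_apply, XX_apply,
      if_true, Module.End.one_apply, Finset.mem_insert_self, Finset.mem_erase, sg_insert_self,
      sg_erase_self]
    by_cases hi : i ∈ U
    · simp [hi, Finset.insert_erase hi]
      rw [← mul_assoc, sg_sq]; simp
    · simp [hi, Finset.erase_insert hi]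
      rw [← mul_assoc, sg_sq]; simp
  · simp only [Module.End.mul_apply, LinearMap.sub_apply, Pi.sub_apply, pd_apply, XX_apply,
      if_neg hij, LinearMap.zero_apply, Pi.zero_apply, Finset.mem_insert, Finset.mem_erase]
    by_cases hi : i ∈ U <;> by_cases hj : j ∈ U <;> simp only [hi, hj, hij, hij.symm, ne_eq,
      not_false_eq_true, and_true, and_false, or_true, or_false, if_true, if_false, mul_zero,
      neg_zero, sub_zero, zero_sub]
    rw [sg_erase i j U hj, sg_insert j i U hi, Finset.erase_insert_of_ne hij]
    rcases lt_or_gt_of_ne hij with h | h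
    · simp only [h, not_lt_of_gt h, if_true, if_false]; ring
    · simp only [h, not_lt_of_gt h, if_true, if_false]; ring

lemma par_par : par n * par n = 1 := by
  apply LinearMap.ext; intro f; funext U
  simp only [Module.End.mul_apply, par_apply, Module.End.one_apply]
  rw [← mul_assoc, msign_sq, one_mul]

lemma par_XX (i : Fin n) : par n * XX n i = - (XX n i * par n) := by
  apply LinearMap.ext; intro f; funext U
  simp only [Module.End.mul_apply, LinearMap.neg_apply, Pi.neg_apply, par_apply, XX_apply]
  split_ifs with h
  · have := Finset.card_erase_add_one h
    rw [← this, msign_succ]; ring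
  · ring

lemma par_pd (i : Fin n) : par n * pd n i = - (pd n i * par n) := by
  apply LinearMap.ext; intro f; funext U
  simp only [Module.End.mul_apply, LinearMap.neg_apply, Pi.neg_apply, par_apply, pd_apply]
  split_ifs with h
  · ring
  · rw [Finset.card_insert_of_notMem h, msign_succ]; ring

lemma pd_one (i : Fin n) : pd n i (mono n ∅) = 0 := pd_mono_notMem i ∅ (by simp)

lemma par_one : par n (mono n ∅) = mono n ∅ := by rw [par_mono]; simp [msign]

lemma mulOp_one : mulOp n (mono n ∅) = 1 := by
  apply LinearMap.ext; intro f; funext U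
  rw [mulOp_apply, Finset.sum_eq_single ∅]
  · simp [mono_apply, inversions, msign]
  · intro S _ hS; rw [mono_apply, if_neg hS]; ring
  · intro h; simp at h

lemma inversions_insert (i : Fin n) (R V : Finset (Fin n)) (h : i ∉ R) :
    msign (inversions n (insert i R) V) = sg n i V * msign (inversions n R V) := by
  unfold inversions sg
  rw [← msign_add]
  congr 1
  simp only [Finset.card_filter, Finset.sum_product, Finset.sum_insert h]

lemma mulOp_XX (i : Fin n) (f : Lambda n) : mulOp n (XX n i f) = XX n i * mulOp n f := by
  apply LinearMap.ext; intro g; funext U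
  rw [Module.End.mul_apply, XX_apply, mulOp_apply]
  split_ifs with h
  · rw [mulOp_apply, Finset.mul_sum]
    obtain ⟨V, hV, rfl⟩ : ∃ V, i ∉ V ∧ U = insert i V :=
      ⟨U.erase i, by simp, (Finset.insert_erase h).symm⟩
    rw [Finset.sum_powerset_insert hV, Finset.erase_insert hV]
    rw [Finset.sum_eq_zero, zero_add]
    · apply Finset.sum_congr rfl
      intro R hR
      have hR' := Finset.mem_powerset.1 hR
      have hiR : i ∉ R := fun hh => hV (hR' hh)
      rw [XX_apply, if_pos (Finset.mem_insert_self _ _), Finset.erase_insert hiR,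
        Finset.insert_sdiff_insert, Finset.sdiff_insert_of_notMem hV, inversions_insert _ _ _ hiR,
        sg_insert_self, sg_insert_self]
      have : sg n i V = sg n i (V \ R) * sg n i R := by
        unfold sg; rw [← msign_add, ← Finset.card_union_of_disjoint, ← Finset.filter_union,
          Finset.sdiff_union_of_subset hR']
        exact Finset.disjoint_filter_filter Finset.sdiff_disjoint
      rw [this]; ring
    · intro R hR
      have hiR : i ∉ R := fun hh => hV (Finset.mem_powerset.1 hR hh)
      rw [XX_apply, if_neg hiR]; ring
  · apply Finset.sum_eq_zero
    intro R hR
    rw [XX_apply, if_neg (fun hh => h (Finset.mem_powerset.1 hR hh))]; ring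

lemma mulOp_mul (f g : Lambda n) : mulOp n (mulOp n f g) = mulOp n f * mulOp n g := by
  induction f using lam_induct with
  | h1 => rw [mulOp_one]; simp
  | hadd f g hf hg => simp only [map_add, LinearMap.add_apply, hf, hg, add_mul]
  | hsmul c f hf => simp only [map_smul, LinearMap.smul_apply, hf, smul_mul_assoc]
  | hX i f hf => rw [mulOp_XX, Module.End.mul_apply, mulOp_XX, hf, mul_assoc]

lemma mulOp_apply_one (f : Lambda n) : mulOp n f (mono n ∅) = f := by
  induction f using lam_induct with
  | h1 => rw [mulOp_one]; simp
  | hadd f g hf hg => simp only [map_add, LinearMap.add_apply, hf, hg]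
  | hsmul c f hf => simp only [map_smul, LinearMap.smul_apply, hf]
  | hX i f hf => rw [mulOp_XX, Module.End.mul_apply, hf]

lemma pd_XX_apply (i j : Fin n) (f : Lambda n) :
    pd n i (XX n j f) = (if i = j then f else 0) - XX n j (pd n i f) := by
  have := congrArg (fun A : E n => A f) (pd_XX i j)
  simp only [Module.End.mul_apply, LinearMap.sub_apply] at this
  rw [this]; split_ifs <;> simp

lemma par_XX_apply (i : Fin n) (f : Lambda n) : par n (XX n i f) = - XX n i (par n f) := by
  have := congrArg (fun A : E n => A f) (par_XX i)
  simpa using this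

lemma par_pd_apply (i : Fin n) (f : Lambda n) : par n (pd n i f) = - pd n i (par n f) := by
  have := congrArg (fun A : E n => A f) (par_pd i)
  simpa using this

lemma par_par_apply (f : Lambda n) : par n (par n f) = f := by
  have := congrArg (fun A : E n => A f) (par_par (n := n))
  simpa using this

/-- The super Leibniz rule. -/
lemma pd_mulOp (i : Fin n) (f : Lambda n) :
    pd n i * mulOp n f = mulOp n (pd n i f) + mulOp n (par n f) * pd n i := by
  induction f using lam_induct with
  | h1 => rw [mulOp_one, pd_one, par_one, mulOp_one]; simp
  | hadd f g hf hg => simp only [map_add, mul_add, hf, hg, add_mul]; abel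
  | hsmul c f hf => simp only [map_smul, hf, smul_mul_assoc, mul_smul_comm, smul_add]
  | hX j f hf =>
    rw [mulOp_XX, ← mul_assoc, pd_XX, sub_mul, mul_assoc, hf, pd_XX_apply, par_XX_apply, map_sub,
      map_neg, mulOp_XX, mulOp_XX]
    split_ifs
    · simp only [one_mul, mul_add, eneg_mul, mul_assoc]; abel
    · simp only [zero_mul, mul_add, eneg_mul, mul_assoc, map_zero]; abel

lemma par_mulOp (f : Lambda n) : par n * mulOp n f = mulOp n (par n f) * par n := by
  induction f using lam_induct with
  | h1 => rw [mulOp_one, par_one, mulOp_one]; simp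
  | hadd f g hf hg => simp only [map_add, mul_add, hf, hg, add_mul]
  | hsmul c f hf => simp only [map_smul, hf, smul_mul_assoc, mul_smul_comm]
  | hX j f hf =>
    rw [mulOp_XX, ← mul_assoc, par_XX, eneg_mul, mul_assoc, hf, par_XX_apply, map_neg, mulOp_XX,
      eneg_mul, mul_assoc]

/-- Supercommutativity with a generator. -/
lemma mulOp_comm_XX (f : Lambda n) (i : Fin n) :
    mulOp n f * XX n i = XX n i * mulOp n (par n f) := by
  induction f using lam_induct with
  | h1 => rw [par_one, mulOp_one]; simp
  | hadd f g hf hg => simp only [map_add, mul_add, hf, hg, add_mul]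
  | hsmul c f hf => simp only [map_smul, hf, smul_mul_assoc, mul_smul_comm]
  | hX j f hf =>
    rw [mulOp_XX, mul_assoc, hf, ← mul_assoc, XX_anti, par_XX_apply, map_neg, mulOp_XX, eneg_mul,
      mul_assoc, emul_neg]

end

section

variable {n}

lemma eneg_one_smul (A : E n) : (-1:ℂ) • A = -A := neg_one_smul ℂ A
lemma esub_smul (a b : ℂ) (A : E n) : (a - b) • A = a • A - b • A := sub_smul a b A


/-! ### Parity and the super bracket -/

lemma zmod2_cases (p : ZMod 2) : p = 0 ∨ p = 1 := by
  fin_cases p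
  · exact Or.inl rfl
  · exact Or.inr rfl

lemma sgn_zero : sgn 0 = 1 := by simp [sgn]
lemma sgn_one : sgn 1 = -1 := by simp [sgn, ZMod.val_one]

lemma sgn_cases (p : ZMod 2) : sgn p = 1 ∨ sgn p = -1 := by
  rcases zmod2_cases p with rfl | rfl
  · exact Or.inl sgn_zero
  · exact Or.inr sgn_one

lemma sgn_sq (p : ZMod 2) : sgn p * sgn p = 1 := by
  rcases sgn_cases p with h | h <;> rw [h] <;> norm_num

lemma sgn_add (p q : ZMod 2) : sgn (p + q) = sgn p * sgn q := by
  rcases zmod2_cases p with rfl | rfl <;> rcases zmod2_cases q with rfl | rfl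
  · simp [sgn_zero]
  · simp [sgn_zero]
  · simp [sgn_zero]
  · rw [show (1 : ZMod 2) + 1 = 0 from rfl, sgn_zero, sgn_one]; norm_num

lemma sgn_inj {p q : ZMod 2} (h : sgn p = sgn q) : p = q := by
  rcases zmod2_cases p with rfl | rfl <;> rcases zmod2_cases q with rfl | rfl
  · rfl
  · rw [sgn_zero, sgn_one] at h; norm_num at h
  · rw [sgn_zero, sgn_one] at h; norm_num at h
  · rfl

lemma msign_eq_sgn (k : ℕ) : msign k = sgn (k : ZMod 2) := by
  induction k with
  | zero => simp [msign, sgn]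
  | succ k ih => rw [msign_succ, ih, Nat.cast_succ, sgn_add, sgn_one]; ring

lemma lpar_iff (q : ZMod 2) (f : Lambda n) : f ∈ lpar n q ↔ par n f = sgn q • f := by
  constructor
  · intro h
    funext S
    rw [par_apply, Pi.smul_apply, smul_eq_mul, msign_eq_sgn]
    by_cases hS : (S.card : ZMod 2) = q
    · rw [hS]
    · rw [h S hS]; ring
  · intro h S hS
    have := congrFun h S
    rw [par_apply, Pi.smul_apply, smul_eq_mul, msign_eq_sgn] at this
    by_contra h0
    exact hS (sgn_inj (mul_right_cancel₀ h0 this))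

lemma mono_lpar (S : Finset (Fin n)) : mono n S ∈ lpar n (S.card : ZMod 2) := by
  rw [lpar_iff, par_mono, msign_eq_sgn]

lemma epar_iff (p : ZMod 2) (A : E n) : A ∈ epar n p ↔ par n * A * par n = sgn p • A := by
  constructor
  · intro h
    apply E_ext
    intro S
    have h1 := (lpar_iff _ _).1 (h _ _ (mono_lpar S))
    simp only [Module.End.mul_apply, LinearMap.smul_apply]
    rw [par_mono, map_smul, map_smul, h1, smul_smul, msign_eq_sgn, sgn_add, ← mul_assoc, sgn_sq,
      one_mul]
  · intro h q f hf
    rw [lpar_iff] at hf ⊢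
    have := congrArg (fun B : E n => B (par n f)) h
    simp only [Module.End.mul_apply, LinearMap.smul_apply] at this
    rw [par_par_apply, hf, map_smul, smul_smul] at this
    rw [this, sgn_add, mul_comm]

lemma conj_mul (A B : E n) :
    par n * (A * B) * par n = (par n * A * par n) * (par n * B * par n) := by
  have : (par n * A * par n) * (par n * B * par n) = par n * A * (par n * par n) * B * par n := by
    simp only [mul_assoc]
  rw [this, par_par]; simp only [mul_assoc, one_mul]

lemma conj_conj (A : E n) : par n * (par n * A * par n) * par n = A := by
  have : par n * (par n * A * par n) * par n = (par n * par n) * A * (par n * par n) := by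
    simp only [mul_assoc]
  rw [this, par_par]; simp

lemma epar_mul {p q : ZMod 2} {A B : E n} (hA : A ∈ epar n p) (hB : B ∈ epar n q) :
    A * B ∈ epar n (p + q) := by
  rw [epar_iff] at *
  rw [conj_mul, hA, hB, sgn_add, smul_mul_assoc, mul_smul_comm, smul_smul]

lemma XX_epar (i : Fin n) : XX n i ∈ epar n 1 := by
  rw [epar_iff, par_XX, eneg_mul, mul_assoc, par_par, mul_one, sgn_one]; module

lemma pd_epar (i : Fin n) : pd n i ∈ epar n 1 := by
  rw [epar_iff, par_pd, eneg_mul, mul_assoc, par_par, mul_one, sgn_one]; module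

lemma conj_mulOp (f : Lambda n) : par n * mulOp n f * par n = mulOp n (par n f) := by
  rw [par_mulOp, mul_assoc, par_par, mul_one]

lemma mulOp_epar {q : ZMod 2} {f : Lambda n} (hf : f ∈ lpar n q) : mulOp n f ∈ epar n q := by
  rw [epar_iff, conj_mulOp, (lpar_iff _ _).1 hf, map_smul]

lemma sbL_apply (A B : E n) : sbL n A B = A * B - (2:ℂ)⁻¹ • ((B + par n * B * par n) * A
    + (B - par n * B * par n) * (par n * A * par n)) := rfl

lemma sb_right0 (A : E n) {B : E n} (hB : B ∈ epar n 0) : sbL n A B = A * B - B * A := by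
  rw [epar_iff, sgn_zero, one_smul] at hB
  rw [sbL_apply, hB, sub_self, zero_mul, add_zero, ← two_smul ℂ B, smul_mul_assoc, smul_smul]
  norm_num

lemma sb_right1 (A : E n) {B : E n} (hB : B ∈ epar n 1) :
    sbL n A B = A * B - B * (par n * A * par n) := by
  rw [epar_iff, sgn_one] at hB
  rw [sbL_apply, hB]
  rw [show B + (-1 : ℂ) • B = 0 by module, show B - (-1 : ℂ) • B = (2 : ℂ) • B by module,
    smul_mul_assoc, zero_mul, zero_add, smul_smul]
  norm_num

lemma sb_left0 {A : E n} (B : E n) (hA : A ∈ epar n 0) : sbL n A B = A * B - B * A := by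
  rw [epar_iff, sgn_zero, one_smul] at hA
  rw [sbL_apply, hA, ← add_mul, show B + par n * B * par n + (B - par n * B * par n)
    = (2 : ℂ) • B by module, smul_mul_assoc, smul_smul]
  norm_num

lemma sb_left1 {A : E n} (B : E n) (hA : A ∈ epar n 1) :
    sbL n A B = A * B - (par n * B * par n) * A := by
  rw [epar_iff, sgn_one] at hA
  rw [sbL_apply, hA, mul_smul_comm, ← smul_mul_assoc, ← add_mul,
    show B + par n * B * par n + (-1 : ℂ) • (B - par n * B * par n)
    = (2 : ℂ) • (par n * B * par n) by module, smul_mul_assoc, smul_smul]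
  norm_num

lemma sb_hom {α β : ZMod 2} {A B : E n} (hA : A ∈ epar n α) (hB : B ∈ epar n β) :
    sbL n A B = A * B - sgn (α * β) • (B * A) := by
  rcases zmod2_cases α with rfl | rfl
  · rw [sb_left0 B hA, zero_mul, sgn_zero, one_smul]
  · rw [sb_left1 B hA, (epar_iff _ _).1 hB, one_mul, smul_mul_assoc]

lemma sb_epar {α β : ZMod 2} {A B : E n} (hA : A ∈ epar n α) (hB : B ∈ epar n β) :
    sbL n A B ∈ epar n (α + β) := by
  rw [sb_hom hA hB]
  refine Submodule.sub_mem _ (epar_mul hA hB) (Submodule.smul_mem _ _ ?_)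
  rw [add_comm]; exact epar_mul hB hA

lemma sb_comm {α β : ZMod 2} {A B : E n} (hA : A ∈ epar n α) (hB : B ∈ epar n β) :
    sbL n A B = - (sgn (α * β) • sbL n B A) := by
  rw [sb_hom hA hB, sb_hom hB hA, smul_sub, smul_smul, mul_comm β α, sgn_sq, one_smul]; abel

lemma jac_aux {R : Type*} [Ring R] [Algebra ℂ R] (A B C : R) (a b c : ℂ) (ha : a * a = 1) :
    A * (B * C - c • (C * B)) - (a * b) • ((B * C - c • (C * B)) * A)
    = (A * B - a • (B * A)) * C - (b * c) • (C * (A * B - a • (B * A)))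
      + a • (B * (A * C - b • (C * A)) - (a * c) • ((A * C - b • (C * A)) * B)) := by
  simp only [mul_sub, sub_mul, smul_sub, mul_smul_comm, smul_mul_assoc, smul_smul, mul_assoc]
  have e1 : a * (a * c) = c := by rw [← mul_assoc, ha, one_mul]
  have e2 : a * (a * (c * b)) = b * c := by rw [← mul_assoc, ha, one_mul, mul_comm]
  rw [e1, e2]
  module

lemma jacobi {α β γ : ZMod 2} {A B C : E n} (hA : A ∈ epar n α) (hB : B ∈ epar n β)
    (hC : C ∈ epar n γ) :
    sbL n A (sbL n B C) = sbL n (sbL n A B) C + sgn (α * β) • sbL n B (sbL n A C) := by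
  rw [sb_hom hA (sb_epar hB hC), sb_hom (sb_epar hA hB) hC, sb_hom hB (sb_epar hA hC),
    sb_hom hA hB, sb_hom hB hC, sb_hom hA hC, mul_add, mul_add, add_mul, sgn_add, sgn_add, sgn_add,
    mul_comm β α]
  exact jac_aux A B C _ _ _ (sgn_sq _)

/-- Projection to the component of parity `p`. -/
def epj (p : ZMod 2) (A : E n) : E n := (2:ℂ)⁻¹ • (A + sgn p • (par n * A * par n))

lemma epj_mem (p : ZMod 2) (A : E n) : epj p A ∈ epar n p := by
  rw [epar_iff, epj]
  simp only [mul_smul_comm, smul_mul_assoc, mul_add, add_mul, conj_conj, smul_add, smul_smul]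
  have := sgn_sq p
  rw [add_comm, mul_comm (2:ℂ)⁻¹ (sgn p), ← mul_assoc (sgn p), this, one_mul]

lemma epj_sum (A : E n) : A = epj 0 A + epj 1 A := by
  rw [epj, epj, sgn_zero, sgn_one]; module

lemma epj_self {p : ZMod 2} {A : E n} (hA : A ∈ epar n p) : epj p A = A := by
  rw [epj, (epar_iff _ _).1 hA, smul_smul, sgn_sq, one_smul]; module

lemma epar_disj {p q : ZMod 2} (h : p ≠ q) {A : E n} (hp : A ∈ epar n p) (hq : A ∈ epar n q) :
    A = 0 := by
  rw [epar_iff] at hp hq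
  rw [hp] at hq
  have : (sgn p - sgn q) • A = 0 := by
    rw [esub_smul, hq]; abel
  rcases smul_eq_zero.1 this with h1 | h1
  · exact absurd (sgn_inj (sub_eq_zero.1 h1)) h
  · exact h1

lemma epj_ne {p q : ZMod 2} (h : p ≠ q) {A : E n} (hA : A ∈ epar n q) : epj p A = 0 := by
  apply epar_disj h (epj_mem p A)
  rw [epj, (epar_iff _ _).1 hA, smul_smul]
  exact Submodule.smul_mem _ _ (Submodule.add_mem _ hA (Submodule.smul_mem _ _ hA))

lemma epj_add (p : ZMod 2) (A B : E n) : epj p (A + B) = epj p A + epj p B := by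
  simp only [epj, mul_add, add_mul]; module

lemma epj_sb (p β : ZMod 2) (A : E n) {B : E n} (hB : B ∈ epar n β) :
    sbL n (epj p A) B = epj (p + β) (sbL n A B) := by
  conv_rhs => rw [epj_sum A, map_add, LinearMap.add_apply, epj_add]
  rcases zmod2_cases p with rfl | rfl
  · rw [epj_self (sb_epar (epj_mem 0 A) hB), epj_ne _ (sb_epar (epj_mem 1 A) hB), add_zero]
    intro h; exact absurd (add_right_cancel h) (by decide)
  · rw [epj_self (sb_epar (epj_mem 1 A) hB), epj_ne _ (sb_epar (epj_mem 0 A) hB), zero_add]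
    intro h; exact absurd (add_right_cancel h) (by decide)

lemma epj_memSub {M : Submodule ℂ (E n)} (hM : ∀ A ∈ M, par n * A * par n ∈ M) (p : ZMod 2)
    {A : E n} (hA : A ∈ M) : epj p A ∈ M :=
  M.smul_mem _ (M.add_mem hA (M.smul_mem _ (hM A hA)))

lemma sb_split {M L K : Submodule ℂ (E n)} (hM : ∀ A ∈ M, par n * A * par n ∈ M)
    (hL : ∀ A ∈ L, par n * A * par n ∈ L)
    (h : ∀ α β, ∀ A ∈ M, ∀ B ∈ L, A ∈ epar n α → B ∈ epar n β → sbL n A B ∈ K)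
    {A B : E n} (hA : A ∈ M) (hB : B ∈ L) : sbL n A B ∈ K := by
  rw [epj_sum A, epj_sum B]
  simp only [map_add, LinearMap.add_apply]
  have := fun α β => h α β _ (epj_memSub hM α hA) _ (epj_memSub hL β hB) (epj_mem _ _) (epj_mem _ _)
  exact K.add_mem (K.add_mem (this _ _) (this _ _)) (K.add_mem (this _ _) (this _ _))

/-! ### The Witt algebra -/

/-- The generator `x_i` as an element of `Λ(n)`. -/
abbrev xg (i : Fin n) : Lambda n := mono n {i}

lemma XX_one (i : Fin n) : XX n i (mono n ∅) = xg i := mulOp_apply_one _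

lemma pd_xg (i j : Fin n) : pd n i (xg j) = if i = j then mono n ∅ else 0 := by
  rw [← XX_one, pd_XX_apply, pd_one, map_zero, sub_zero]

lemma Wmap_eq (F : Fin n → Lambda n) : Wmap n F = ∑ i, mulOp n (F i) * pd n i := rfl

lemma Wmap_xg (F : Fin n → Lambda n) (i : Fin n) : Wmap n F (xg i) = F i := by
  rw [Wmap_eq, LinearMap.sum_apply, Finset.sum_eq_single i]
  · rw [Module.End.mul_apply, pd_xg, if_pos rfl, mulOp_apply_one]
  · intro j _ hj; rw [Module.End.mul_apply, pd_xg, if_neg hj, map_zero]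
  · intro h; exact absurd (Finset.mem_univ _) h

lemma Wn_eq {A : E n} (hA : A ∈ Wn n) : A = Wmap n (fun i => A (xg i)) := by
  obtain ⟨F, rfl⟩ := hA
  congr 1; funext i; rw [Wmap_xg]

lemma Wn_ext {A B : E n} (hA : A ∈ Wn n) (hB : B ∈ Wn n) (h : ∀ i, A (xg i) = B (xg i)) :
    A = B := by
  rw [Wn_eq hA, Wn_eq hB]; congr 1; funext i; exact h i

lemma Wmap_mem (F : Fin n → Lambda n) : Wmap n F ∈ Wn n := ⟨F, rfl⟩

lemma term_mem (f : Lambda n) (i : Fin n) : mulOp n f * pd n i ∈ Wn n := by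
  refine ⟨Pi.single i f, ?_⟩
  rw [Wmap_eq, Finset.sum_eq_single i]
  · simp
  · intro j _ hj; simp [hj]
  · intro h; exact absurd (Finset.mem_univ _) h

lemma pd_mem (i : Fin n) : pd n i ∈ Wn n := by
  have := term_mem (mono n ∅) i
  rwa [mulOp_one, one_mul] at this

lemma mulOp_mul_mem (f : Lambda n) {A : E n} (hA : A ∈ Wn n) : mulOp n f * A ∈ Wn n := by
  rw [Wn_eq hA, Wmap_eq, Finset.mul_sum]
  refine Submodule.sum_mem _ fun i _ => ?_
  rw [← mul_assoc, ← mulOp_mul]; exact term_mem _ _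

lemma Wn_one {A : E n} (hA : A ∈ Wn n) : A (mono n ∅) = 0 := by
  rw [Wn_eq hA, Wmap_eq, LinearMap.sum_apply]
  exact Finset.sum_eq_zero fun i _ => by rw [Module.End.mul_apply, pd_one, map_zero]

lemma conj_term (f : Lambda n) (i : Fin n) :
    par n * (mulOp n f * pd n i) * par n = mulOp n (- par n f) * pd n i := by
  rw [conj_mul, conj_mulOp, (epar_iff _ _).1 (pd_epar i), sgn_one, map_neg, eneg_mul,
    mul_smul_comm, eneg_one_smul]

lemma Wn_conj {A : E n} (hA : A ∈ Wn n) : par n * A * par n ∈ Wn n := by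
  rw [Wn_eq hA, Wmap_eq, Finset.mul_sum, Finset.sum_mul]
  exact Submodule.sum_mem _ fun i _ => by rw [conj_term]; exact term_mem _ _

lemma Wn_sb_XX {A : E n} (hA : A ∈ Wn n) (i : Fin n) :
    sbL n A (XX n i) = mulOp n (A (xg i)) := by
  conv_lhs => rw [Wn_eq hA, Wmap_eq]
  rw [map_sum, LinearMap.sum_apply, Finset.sum_eq_single i]
  · rw [sb_right1 _ (XX_epar i), conj_term, mul_assoc, pd_XX, if_pos rfl, mul_sub, mul_one,
      ← mul_assoc, ← mul_assoc, mulOp_comm_XX, map_neg, emul_neg, eneg_mul]; abel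
  · intro j _ hj
    rw [sb_right1 _ (XX_epar i), conj_term, mul_assoc, pd_XX, if_neg hj, mul_sub, mul_zero,
      ← mul_assoc, ← mul_assoc, mulOp_comm_XX, map_neg, emul_neg, eneg_mul]; abel
  · intro h; exact absurd (Finset.mem_univ _) h

lemma Wn_char {A : E n} (h1 : A (mono n ∅) = 0)
    (h : ∀ i, ∃ g, sbL n A (XX n i) = mulOp n g) : A ∈ Wn n := by
  set B := Wmap n (fun i => A (xg i)) with hB
  have hBm : B ∈ Wn n := Wmap_mem _
  suffices hC : A - B = 0 by rw [sub_eq_zero.1 hC]; exact hBm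
  set C := A - B with hCdef
  have hC1 : C (mono n ∅) = 0 := by
    rw [hCdef, LinearMap.sub_apply, h1, Wn_one hBm, sub_zero]
  have hCx : ∀ i, C (xg i) = 0 := by
    intro i; rw [hCdef, LinearMap.sub_apply, hB, Wmap_xg, sub_self]
  have key : ∀ i, C * XX n i = XX n i * (par n * C * par n) := by
    intro i
    obtain ⟨g, hg⟩ := h i
    have e : C * XX n i - XX n i * (par n * C * par n) = mulOp n (g - A (xg i)) := by
      rw [← sb_right1 _ (XX_epar i), hCdef, map_sub, LinearMap.sub_apply, hg, Wn_sb_XX hBm, hB,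
        Wmap_xg, map_sub]
    have e1 := congrArg (fun D : E n => D (mono n ∅)) e
    simp only [LinearMap.sub_apply, Module.End.mul_apply, par_one, hC1, map_zero, XX_one, hCx,
      mulOp_apply_one, sub_zero] at e1
    rw [← e1, map_zero] at e
    exact sub_eq_zero.1 e
  have keyf : ∀ i f, C (XX n i f) = XX n i (par n (C (par n f))) := by
    intro i f
    exact congrArg (fun D : E n => D f) (key i)
  have all : ∀ f, C f = 0 ∧ C (par n f) = 0 := by
    intro f
    induction f using lam_induct with
    | h1 => rw [par_one]; exact ⟨hC1, hC1⟩
    | hadd f g hf hg => simp [map_add, hf.1, hf.2, hg.1, hg.2]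
    | hsmul c f hf => simp [map_smul, hf.1, hf.2]
    | hX i f hf =>
      refine ⟨by rw [keyf, hf.2]; simp, ?_⟩
      rw [par_XX_apply, map_neg, keyf, par_par_apply, hf.1]; simp
  exact LinearMap.ext fun f => (all f).1

lemma sb_mul_XX {α : ZMod 2} {A : E n} (hA : A ∈ epar n α) (i : Fin n) (C : E n) :
    sbL n A (XX n i * C) = sbL n A (XX n i) * C + sgn α • (XX n i * sbL n A C) := by
  have hX := (epar_iff _ _).1 (XX_epar (n := n) i)
  rcases zmod2_cases α with rfl | rfl
  · rw [sb_left0 _ hA, sb_left0 _ hA, sb_left0 _ hA, sgn_zero, one_smul, sub_mul, mul_sub]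
    simp only [mul_assoc]; abel
  · rw [sb_left1 _ hA, sb_left1 _ hA, sb_left1 _ hA, conj_mul, hX, sgn_one, eneg_one_smul,
      eneg_one_smul, sub_mul, mul_sub]
    simp only [mul_assoc, eneg_mul, sub_neg_eq_add, neg_sub, sub_eq_add_neg, neg_add_rev, neg_neg]
    abel

lemma Wn_sb_mulOp_hom {α : ZMod 2} {A : E n} (hA : A ∈ Wn n) (hα : A ∈ epar n α) (f : Lambda n) :
    sbL n A (mulOp n f) = mulOp n (A f) := by
  have h : ∃ g, sbL n A (mulOp n f) = mulOp n g := by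
    induction f using lam_induct with
    | h1 =>
      refine ⟨0, ?_⟩
      have : (1 : E n) ∈ epar n 0 := by rw [epar_iff, mul_one, par_par, sgn_zero, one_smul]
      rw [mulOp_one, sb_right0 _ this]; simp
    | hadd f g hf hg =>
      obtain ⟨a, ha⟩ := hf
      obtain ⟨b, hb⟩ := hg
      exact ⟨a + b, by simp only [map_add, ha, hb]⟩
    | hsmul c f hf =>
      obtain ⟨a, ha⟩ := hf
      exact ⟨c • a, by simp only [map_smul, ha]⟩
    | hX i f hf =>
      obtain ⟨a, ha⟩ := hf
      refine ⟨mulOp n (A (xg i)) f + sgn α • XX n i a, ?_⟩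
      rw [mulOp_XX, sb_mul_XX hα, ha, Wn_sb_XX hA, map_add, mulOp_mul, map_smul, mulOp_XX]
  obtain ⟨g, hg⟩ := h
  have e := congrArg (fun D : E n => D (mono n ∅)) hg
  have hA1 := Wn_one hA
  rw [hg]; congr 1
  rw [← mulOp_apply_one g]
  rw [← hg]
  rcases zmod2_cases α with rfl | rfl
  · rw [sb_left0 _ hα]; simp [hA1, mulOp_apply_one]
  · rw [sb_left1 _ hα]; simp [hA1, mulOp_apply_one]

lemma Wn_sb_mem {A B : E n} (hA : A ∈ Wn n) (hB : B ∈ Wn n) : sbL n A B ∈ Wn n := by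
  refine sb_split (fun _ => Wn_conj) (fun _ => Wn_conj) ?_ hA hB
  intro α β A hA B hB hα hβ
  apply Wn_char
  · rw [sb_hom hα hβ]; simp [Wn_one hA, Wn_one hB]
  · intro i
    have := jacobi hα hβ (XX_epar i)
    rw [Wn_sb_XX hB, Wn_sb_XX hA, Wn_sb_mulOp_hom hA hα, Wn_sb_mulOp_hom hB hβ, ← map_smul] at this
    exact ⟨_, by rw [map_sub]; exact (sub_eq_of_eq_add this).symm⟩

end

section

variable {n}

lemma ad_isder {L : Submodule ℂ (E n)} {p : ZMod 2} {a : E n} (ha : a ∈ epar n p)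
    (h : ∀ x ∈ L, sbL n a x ∈ L) : IsSuperDer n L p (sbL n a) where
  maps := by
    intro α x hx
    exact ⟨h x hx.1, by rw [add_comm]; exact sb_epar ha hx.2⟩
  leib := by
    intro α β x hx y hy
    exact jacobi ha hx.2 hy.2

lemma der_add {L : Submodule ℂ (E n)} {p : ZMod 2} {D D' : E n →ₗ[ℂ] E n}
    (h : IsSuperDer n L p D) (h' : IsSuperDer n L p D') : IsSuperDer n L p (D + D') where
  maps := by
    intro α x hx
    exact Submodule.add_mem _ (h.maps α x hx) (h'.maps α x hx)
  leib := by
    intro α β x hx y hy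
    simp only [LinearMap.add_apply, h.leib α β x hx y hy, h'.leib α β x hx y hy, map_add, smul_add]
    abel

lemma der_leib {L : Submodule ℂ (E n)} (hL : ∀ A ∈ L, par n * A * par n ∈ L) {p : ZMod 2}
    {D : E n →ₗ[ℂ] E n} (h : IsSuperDer n L p D) {α : ZMod 2} {x : E n} (hx : x ∈ L)
    (hα : x ∈ epar n α) {y : E n} (hy : y ∈ L) :
    D (sbL n x y) = sbL n (D x) y + sgn (p * α) • sbL n x (D y) := by
  have e0 := h.leib α 0 x ⟨hx, hα⟩ (epj 0 y) ⟨epj_memSub hL _ hy, epj_mem _ _⟩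
  have e1 := h.leib α 1 x ⟨hx, hα⟩ (epj 1 y) ⟨epj_memSub hL _ hy, epj_mem _ _⟩
  rw [epj_sum y]
  simp only [map_add, smul_add, e0, e1]
  abel

lemma der_maps {L : Submodule ℂ (E n)} (hL : ∀ A ∈ L, par n * A * par n ∈ L) {p : ZMod 2}
    {D : E n →ₗ[ℂ] E n} (h : IsSuperDer n L p D) {x : E n} (hx : x ∈ L) : D x ∈ L := by
  rw [epj_sum x, map_add]
  exact L.add_mem (h.maps 0 _ ⟨epj_memSub hL _ hx, epj_mem _ _⟩).1
    (h.maps 1 _ ⟨epj_memSub hL _ hx, epj_mem _ _⟩).1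

lemma jacobi_left {α β : ZMod 2} {A B : E n} (hA : A ∈ epar n α) (hB : B ∈ epar n β) (C : E n) :
    sbL n A (sbL n B C) = sbL n (sbL n A B) C + sgn (α * β) • sbL n B (sbL n A C) := by
  rw [epj_sum C]
  simp only [map_add, smul_add, jacobi hA hB (epj_mem _ _)]
  abel

lemma inner_of_add {L P : Submodule ℂ (E n)} {D : E n →ₗ[ℂ] E n} {b : E n} (hb : b ∈ P)
    (h : ∃ a ∈ P, ∀ x ∈ L, (D + sbL n b) x = sbL n a x) : ∃ a ∈ P, ∀ x ∈ L, D x = sbL n a x := by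
  obtain ⟨a, ha, h⟩ := h
  refine ⟨a - b, P.sub_mem ha hb, fun x hx => ?_⟩
  rw [map_sub, LinearMap.sub_apply, ← h x hx, LinearMap.add_apply]; abel

/-- the diagonal element with eigenvalues c -/
def dg (c : Fin n → ℂ) : E n := ∑ i, c i • (XX n i * pd n i)

lemma XXpd_mono (i : Fin n) (S : Finset (Fin n)) :
    (XX n i * pd n i) (mono n S) = if i ∈ S then mono n S else 0 := by
  rw [Module.End.mul_apply]
  split_ifs with h
  · rw [pd_mono _ _ h, map_smul, XX_mono _ _ (by simp), sg_erase_self, smul_smul, sg_sq, one_smul,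
      Finset.insert_erase h]
  · rw [pd_mono_notMem _ _ h, map_zero]

lemma dg_mono (c : Fin n → ℂ) (S : Finset (Fin n)) :
    dg c (mono n S) = (∑ i ∈ S, c i) • mono n S := by
  rw [dg, LinearMap.sum_apply, Finset.sum_smul]
  simp only [LinearMap.smul_apply, XXpd_mono]
  rw [← Finset.sum_filter_add_sum_filter_not Finset.univ (fun i => i ∈ S)]
  rw [Finset.sum_congr rfl (g := fun i => c i • mono n S) (by intro x hx; simp_all)]
  rw [Finset.sum_eq_zero (s := Finset.univ.filter (fun i => i ∉ S)) (by intro x hx; simp_all)]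
  simp

lemma dg_apply (c : Fin n → ℂ) (f : Lambda n) (T : Finset (Fin n)) :
    dg c f T = (∑ i ∈ T, c i) * f T := by
  conv_lhs => rw [lam_eq_sum f]
  simp only [map_sum, map_smul, dg_mono, Finset.sum_apply, Pi.smul_apply, mono_apply, smul_eq_mul]
  simp [mul_comm]

lemma dg_mem (c : Fin n → ℂ) : dg c ∈ Wn n :=
  Submodule.sum_mem _ fun i _ => Submodule.smul_mem _ _ (term_mem _ _)

lemma XXpd_even (i j : Fin n) : XX n i * pd n j ∈ epar n 0 := by
  have := epar_mul (XX_epar i) (pd_epar j)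
  rwa [show (1 : ZMod 2) + 1 = 0 from rfl] at this

lemma dg_even (c : Fin n → ℂ) : dg c ∈ epar n 0 :=
  Submodule.sum_mem _ fun i _ => Submodule.smul_mem _ _ (XXpd_even i i)

lemma CC_eq : CC n = dg (fun _ => 1) := by
  simp [CC, dg, XX]

lemma dg_sb (c : Fin n → ℂ) (A : E n) (S T : Finset (Fin n)) :
    sbL n (dg c) A (mono n S) T = (∑ i ∈ T, c i - ∑ i ∈ S, c i) * A (mono n S) T := by
  rw [sb_left0 _ (dg_even c), LinearMap.sub_apply, Module.End.mul_apply, Module.End.mul_apply,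
    Pi.sub_apply, dg_apply, dg_mono, map_smul, Pi.smul_apply, smul_eq_mul]; ring

lemma E_ext' {A B : E n} (h : ∀ S T, A (mono n S) T = B (mono n S) T) : A = B :=
  E_ext fun S => funext fun T => h S T

lemma dg_dg (c b : Fin n → ℂ) : sbL n (dg c) (dg b) = 0 := by
  apply E_ext'; intro S T
  rw [dg_sb, dg_mono]
  by_cases h : T = S
  · subst h; simp
  · simp [mono_apply, h]

lemma dg_ker {c : Fin n → ℂ} {A : E n} {l : ℂ}
    (h : sbL n (dg c) (sbL n (dg c) A - l • A) = l • (sbL n (dg c) A - l • A)) :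
    sbL n (dg c) A = l • A := by
  apply E_ext'; intro S T
  have := congrArg (fun B : E n => B (mono n S) T) h
  simp only [dg_sb, LinearMap.sub_apply, LinearMap.smul_apply, Pi.sub_apply, Pi.smul_apply,
    smul_eq_mul] at this ⊢
  set k := ∑ i ∈ T, c i - ∑ i ∈ S, c i
  have h2 : (k - l) * ((k - l) * A (mono n S) T) = 0 := by linear_combination this
  rcases mul_eq_zero.1 h2 with h | h
  · rw [sub_eq_zero.1 h]
  · linear_combination h

lemma range_sq {V : Type*} [AddCommGroup V] [Module ℂ V] [FiniteDimensional ℂ V] (f : V →ₗ[ℂ] V)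
    (hk : LinearMap.ker (f ∘ₗ f) = LinearMap.ker f) :
    LinearMap.range (f ∘ₗ f) = LinearMap.range f := by
  apply Submodule.eq_of_le_of_finrank_eq (LinearMap.range_comp_le_range f f)
  have h1 := LinearMap.finrank_range_add_finrank_ker (f ∘ₗ f)
  have h2 := LinearMap.finrank_range_add_finrank_ker f
  rw [hk] at h1; omega

lemma dg_fix {L : Submodule ℂ (E n)} {c : Fin n → ℂ} (hc : ∀ x ∈ L, sbL n (dg c) x ∈ L) {u : E n}
    (hu : u ∈ L) : ∃ a ∈ L, sbL n (dg c) (u + sbL n (dg c) a) = 0 := by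
  let f : L →ₗ[ℂ] L := (sbL n (dg c)).restrict hc
  have hk : LinearMap.ker (f ∘ₗ f) = LinearMap.ker f := by
    apply le_antisymm
    · intro x hx
      have h0 : sbL n (dg c) (sbL n (dg c) x.1) = 0 := congrArg Subtype.val (LinearMap.mem_ker.1 hx)
      have : sbL n (dg c) x.1 = (0:ℂ) • x.1 := by
        apply dg_ker
        rw [zero_smul, sub_zero, h0, zero_smul]
      rw [zero_smul] at this
      exact LinearMap.mem_ker.2 (Subtype.ext this)
    · intro x hx
      rw [LinearMap.mem_ker] at *
      rw [LinearMap.comp_apply, hx, map_zero]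
  have hr : LinearMap.range (f ∘ₗ f) = LinearMap.range f := by
    exact range_sq (V := L) f hk
  have : f ⟨u, hu⟩ ∈ LinearMap.range (f ∘ₗ f) := by rw [hr]; exact ⟨_, rfl⟩
  obtain ⟨a, ha⟩ := this
  refine ⟨-a.1, L.neg_mem a.2, ?_⟩
  have h0 : sbL n (dg c) (sbL n (dg c) a.1) = sbL n (dg c) u := congrArg Subtype.val ha
  rw [map_neg, map_add, map_neg, h0]; abel

lemma der_eig {L : Submodule ℂ (E n)} (hL : ∀ A ∈ L, par n * A * par n ∈ L) {p : ZMod 2}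
    {D : E n →ₗ[ℂ] E n} (h : IsSuperDer n L p D) {c : Fin n → ℂ} (hc : dg c ∈ L)
    (h0 : sbL n (dg c) (D (dg c)) = 0) {x : E n} (hx : x ∈ L) {l : ℂ}
    (hl : sbL n (dg c) x = l • x) : sbL n (dg c) (D x) = l • D x := by
  have e := der_leib hL h hc (dg_even c) hx
  rw [hl, map_smul, mul_zero, sgn_zero, one_smul] at e
  have hp : D (dg c) ∈ epar n p := by
    have := (h.maps 0 _ ⟨hc, dg_even c⟩).2; rwa [zero_add] at this
  have e2 := jacobi_left (dg_even c) hp x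
  rw [h0, map_zero, LinearMap.zero_apply, zero_add, zero_mul, sgn_zero, one_smul, hl, map_smul] at e2
  apply dg_ker
  have e3 : sbL n (dg c) (D x) - l • D x = - sbL n (D (dg c)) x := by rw [e]; abel
  rw [e3, map_neg, e2]; module

lemma der_fix {L P : Submodule ℂ (E n)} (hL : ∀ A ∈ L, par n * A * par n ∈ L)
    (hcl : ∀ A ∈ L, ∀ B ∈ L, sbL n A B ∈ L) (hLP : L ≤ P) {p : ZMod 2}
    {D : E n →ₗ[ℂ] E n} (h : IsSuperDer n L p D) {c : Fin n → ℂ} (hc : dg c ∈ L)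
    (H : ∀ D' : E n →ₗ[ℂ] E n, IsSuperDer n L p D' → sbL n (dg c) (D' (dg c)) = 0 →
      ∃ a ∈ P, ∀ x ∈ L, D' x = sbL n a x) : ∃ a ∈ P, ∀ x ∈ L, D x = sbL n a x := by
  have hM : ∀ x ∈ L ⊓ epar n p, sbL n (dg c) x ∈ L ⊓ epar n p := fun x hx =>
    ⟨hcl _ hc _ hx.1, by have := sb_epar (dg_even c) hx.2; rwa [zero_add] at this⟩
  have hu : D (dg c) ∈ L ⊓ epar n p := by
    have := h.maps 0 _ ⟨hc, dg_even c⟩; rwa [zero_add] at this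
  obtain ⟨a, ha, e⟩ := dg_fix hM hu
  have hb : -a ∈ L ⊓ epar n p := Submodule.neg_mem _ ha
  apply inner_of_add (b := -a) (hLP hb.1)
  apply H _ (der_add h (ad_isder hb.2 fun x hx => hcl _ hb.1 _ hx))
  rw [LinearMap.add_apply, sb_comm hb.2 (dg_even c), mul_zero, sgn_zero, one_smul, map_neg, neg_neg]
  exact e

/-- approximate grading -/
def GG (N : ℕ) (k : ℤ) : Submodule ℂ (E n) where
  carrier := {A | ∀ S T, A (mono n S) T ≠ 0 → (N : ℤ) ∣ (T.card : ℤ) - S.card - k}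
  add_mem' := by
    intro A B hA hB S T h
    by_cases h1 : A (mono n S) T = 0
    · apply hB; intro h2; apply h; rw [LinearMap.add_apply, Pi.add_apply, h1, h2, add_zero]
    · exact hA _ _ h1
  zero_mem' := by intro S T h; simp at h
  smul_mem' := by
    intro c A hA S T h
    apply hA; intro h2; apply h; rw [LinearMap.smul_apply, Pi.smul_apply, h2, smul_zero]

lemma GG_apply {N : ℕ} {k : ℤ} {A : E n} (hA : A ∈ GG N k) {f : Lambda n} {d : ℤ}
    (hf : ∀ S, f S ≠ 0 → (N:ℤ) ∣ (S.card : ℤ) - d) {T : Finset (Fin n)} (h : A f T ≠ 0) :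
    (N : ℤ) ∣ (T.card : ℤ) - (d + k) := by
  rw [lam_eq_sum f, map_sum, Finset.sum_apply] at h
  obtain ⟨S, -, hS⟩ := Finset.exists_ne_zero_of_sum_ne_zero h
  rw [map_smul, Pi.smul_apply, smul_eq_mul] at hS
  have h1 := hf S (left_ne_zero_of_mul hS)
  have h2 := hA S T (right_ne_zero_of_mul hS)
  have := dvd_add h1 h2
  rwa [show (S.card : ℤ) - d + ((T.card : ℤ) - S.card - k) = (T.card : ℤ) - (d + k) by ring] at this

lemma GG_mul {N : ℕ} {k l : ℤ} {A B : E n} (hA : A ∈ GG N k) (hB : B ∈ GG N l) :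
    A * B ∈ GG N (k + l) := by
  intro S T h
  rw [Module.End.mul_apply] at h
  have := GG_apply hA (d := S.card + l) (f := B (mono n S))
    (by intro U hU; have := hB S U hU; convert this using 1; ring) h
  convert this using 1; ring

lemma GG_conj {N : ℕ} {k : ℤ} {A : E n} (hA : A ∈ GG N k) : par n * A * par n ∈ GG N k := by
  intro S T h
  apply hA S T
  rw [Module.End.mul_apply, Module.End.mul_apply, par_mono, map_smul, map_smul, Pi.smul_apply,
    par_apply] at h
  exact right_ne_zero_of_mul (right_ne_zero_of_mul h)

lemma GG_sb {N : ℕ} {k l : ℤ} {A B : E n} (hA : A ∈ GG N k) (hB : B ∈ GG N l) :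
    sbL n A B ∈ GG N (k + l) := by
  rw [sbL_apply]
  refine Submodule.sub_mem _ (GG_mul hA hB) (Submodule.smul_mem _ _ (Submodule.add_mem _ ?_ ?_))
  · rw [add_comm k l]; exact GG_mul (Submodule.add_mem _ hB (GG_conj hB)) hA
  · rw [add_comm k l]; exact GG_mul (Submodule.sub_mem _ hB (GG_conj hB)) (GG_conj hA)

/-- genericity of weights -/
def Gen (N : ℕ) (c : Fin n → ℂ) : Prop :=
  ∀ m : Fin n → ℤ, ∑ i, (m i : ℂ) * c i = 0 → (N : ℤ) ∣ ∑ i, m i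

lemma Gen_card {N : ℕ} {c : Fin n → ℂ} (h : Gen N c) {S T S' T' : Finset (Fin n)}
    (e : ∑ i ∈ T, c i - ∑ i ∈ S, c i = ∑ i ∈ T', c i - ∑ i ∈ S', c i) :
    (N : ℤ) ∣ ((T.card : ℤ) - S.card) - ((T'.card : ℤ) - S'.card) := by
  have hs : ∀ U : Finset (Fin n), ∑ i, (if i ∈ U then (1:ℂ) else 0) * c i = ∑ i ∈ U, c i := by
    intro U; simp
  have hs' : ∀ U : Finset (Fin n), ∑ i, (if i ∈ U then (1:ℤ) else 0) = U.card := by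
    intro U; simp
  have := h (fun i => ((if i ∈ T then 1 else 0) - (if i ∈ S then 1 else 0))
    - ((if i ∈ T' then 1 else 0) - (if i ∈ S' then 1 else 0))) (by
      push_cast
      simp only [sub_mul, Finset.sum_sub_distrib, hs]
      linear_combination e)
  simpa only [Finset.sum_sub_distrib, hs'] using this

lemma eig_entry {c : Fin n → ℂ} {A : E n} {l : ℂ} (h : sbL n (dg c) A = l • A)
    {S T : Finset (Fin n)} (hA : A (mono n S) T ≠ 0) : ∑ i ∈ T, c i - ∑ i ∈ S, c i = l := by
  have := congrArg (fun B : E n => B (mono n S) T) h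
  simp only [dg_sb, LinearMap.smul_apply, Pi.smul_apply, smul_eq_mul] at this
  exact mul_right_cancel₀ hA this

lemma exists_entry {A : E n} (h : A ≠ 0) : ∃ S T, A (mono n S) T ≠ 0 := by
  by_contra hc
  push Not at hc
  exact h (E_ext' fun S T => by rw [hc]; rfl)

lemma eig_GG {N : ℕ} {c : Fin n → ℂ} (hg : Gen N c) {A B : E n} {l : ℂ} {k : ℤ}
    (hA : sbL n (dg c) A = l • A) (hB : sbL n (dg c) B = l • B) (h0 : A ≠ 0) (hk : A ∈ GG N k) :
    B ∈ GG N k := by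
  obtain ⟨S, T, h1⟩ := exists_entry h0
  intro S' T' h2
  have e := Gen_card hg ((eig_entry hB h2).trans (eig_entry hA h1).symm)
  have := dvd_add e (hk _ _ h1)
  rwa [show (T'.card : ℤ) - S'.card - ((T.card : ℤ) - S.card) + ((T.card : ℤ) - S.card - k)
    = (T'.card : ℤ) - S'.card - k by ring] at this

lemma eig_span {L : Submodule ℂ (E n)} {c : Fin n → ℂ} (hc : ∀ x ∈ L, sbL n (dg c) x ∈ L)
    {P : E n → Prop} (h0 : P 0) (hadd : ∀ x y, P x → P y → P (x + y))
    (H : ∀ x ∈ L, ∀ l : ℂ, sbL n (dg c) x = l • x → P x) {x : E n} (hx : x ∈ L) : P x := by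
  have key := Submodule.inf_iSup_genEigenspace (f := sbL n (dg c)) (p := L) hc ⊤
  have e : (⨆ μ, (Module.End.genEigenspace (sbL n (dg c)) μ) ⊤) = ⊤ := 
    Module.End.iSup_maxGenEigenspace_eq_top _
  rw [e, inf_top_eq] at key
  rw [key] at hx
  refine Submodule.iSup_induction _ (motive := P) hx ?_ h0 hadd
  intro l y hy
  refine H y hy.1 l ?_
  obtain ⟨k, hk⟩ := (Module.End.mem_maxGenEigenspace _ _ _).1 hy.2
  apply E_ext'; intro S T
  have hp : ∀ m : ℕ, (((sbL n (dg c) - l • (1 : Module.End ℂ (E n))) ^ m) y) (mono n S) T =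
      ((∑ i ∈ T, c i - ∑ i ∈ S, c i) - l) ^ m * y (mono n S) T := by
    intro m
    induction m with
    | zero => simp
    | succ m ih =>
      rw [pow_succ', Module.End.mul_apply, LinearMap.sub_apply, LinearMap.sub_apply, Pi.sub_apply,
        dg_sb, LinearMap.smul_apply, Module.End.one_apply, LinearMap.smul_apply, Pi.smul_apply, ih,
        smul_eq_mul]; ring
  have := hp k
  rw [hk, LinearMap.zero_apply, Pi.zero_apply] at this
  rw [dg_sb, LinearMap.smul_apply, Pi.smul_apply, smul_eq_mul]
  rcases mul_eq_zero.1 this.symm with h | h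
  · rw [sub_eq_zero.1 (eq_zero_of_pow_eq_zero h)]
  · rw [h]; simp

end

section

variable {n}

lemma mulOp_deg {a b : ℕ} {f g : Lambda n} (hf : ∀ S, f S ≠ 0 → S.card = a)
    (hg : ∀ S, g S ≠ 0 → S.card = b) {U : Finset (Fin n)} (h : mulOp n f g U ≠ 0) :
    U.card = a + b := by
  rw [mulOp_apply] at h
  obtain ⟨S, hS, h⟩ := Finset.exists_ne_zero_of_sum_ne_zero h
  have h1 := hf S (right_ne_zero_of_mul (left_ne_zero_of_mul h))
  have h2 := hg _ (right_ne_zero_of_mul h)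
  have := Finset.card_sdiff_add_card_eq_card (Finset.mem_powerset.1 hS)
  omega

lemma pd_mono_ne {i : Fin n} {S T : Finset (Fin n)} (h : pd n i (mono n S) T ≠ 0) :
    T.card + 1 = S.card := by
  by_cases hi : i ∈ S
  · rw [pd_mono _ _ hi, Pi.smul_apply, mono_apply] at h
    have : T = S.erase i := by by_contra hc; simp [hc] at h
    rw [this, Finset.card_erase_add_one hi]
  · rw [pd_mono_notMem _ _ hi] at h; simp at h

lemma Wn_deg {A : E n} (hA : A ∈ Wn n) {d : ℕ} (hd : ∀ m S, A (xg m) S ≠ 0 → S.card = d)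
    {S T : Finset (Fin n)} (h : A (mono n S) T ≠ 0) : T.card + 1 = S.card + d := by
  rw [Wn_eq hA, Wmap_eq, LinearMap.sum_apply, Finset.sum_apply] at h
  obtain ⟨i, -, h⟩ := Finset.exists_ne_zero_of_sum_ne_zero h
  rw [Module.End.mul_apply] at h
  by_cases hi : 0 < S.card
  · have := mulOp_deg (b := S.card - 1) (hd i) (fun U hU => by have := pd_mono_ne hU; omega) h
    omega
  · rw [Finset.card_eq_zero.1 (by omega : S.card = 0), pd_one, map_zero] at h
    simp at h

lemma XX_mulOp_top (f : Lambda n) : mulOp n f (mono n Finset.univ) = f ∅ • mono n Finset.univ := by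
  induction f using lam_induct with
  | h1 => rw [mulOp_one]; simp [mono_apply]
  | hadd f g hf hg => rw [map_add, LinearMap.add_apply, hf, hg, Pi.add_apply, add_smul]
  | hsmul c f hf => rw [map_smul, LinearMap.smul_apply, hf, Pi.smul_apply, smul_smul, smul_eq_mul]
  | hX i f hf =>
    rw [mulOp_XX, Module.End.mul_apply, hf, map_smul, XX_mono_mem _ _ (Finset.mem_univ _),
      XX_apply]; simp

lemma mulOp_top (f : Lambda n) : mulOp n (mono n Finset.univ) f = f ∅ • mono n Finset.univ := by
  induction f using lam_induct with
  | h1 => rw [mulOp_apply_one]; simp [mono_apply]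
  | hadd f g hf hg => rw [map_add, hf, hg, Pi.add_apply, add_smul]
  | hsmul c f hf => rw [map_smul, hf, Pi.smul_apply, smul_smul, smul_eq_mul]
  | hX i f hf =>
    have := congrArg (fun A : E n => A f) (mulOp_comm_XX (mono n Finset.univ) i)
    simp only [Module.End.mul_apply] at this
    rw [this, par_mono, map_smul, LinearMap.smul_apply, hf, map_smul, map_smul,
      XX_mono_mem _ _ (Finset.mem_univ _), XX_apply]; simp

/-- the elements `(1 - ε ω)∂_i` -/
def vv (ε : ℂ) (i : Fin n) : E n := mulOp n (mono n ∅ - ε • mono n Finset.univ) * pd n i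

lemma vv_apply (ε : ℂ) (i : Fin n) (f : Lambda n) :
    vv ε i f = pd n i f - (ε * pd n i f ∅) • mono n Finset.univ := by
  rw [vv, Module.End.mul_apply, map_sub, LinearMap.sub_apply, mulOp_one, map_smul,
    LinearMap.smul_apply, mulOp_top, smul_smul]; rfl

lemma vv_xg (ε : ℂ) (i m : Fin n) :
    vv ε i (xg m) = if i = m then mono n ∅ - ε • mono n Finset.univ else 0 := by
  rw [vv_apply, pd_xg]
  split_ifs <;> simp [mono_apply]

lemma vv_mem (ε : ℂ) (i : Fin n) : vv ε i ∈ Wn n := term_mem _ _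

lemma vv_odd {ε : ℂ} (hε : ε = 0 ∨ Even n) (i : Fin n) : vv ε i ∈ epar n 1 := by
  have : mulOp n (mono n ∅ - ε • mono n Finset.univ) ∈ epar n 0 := by
    apply mulOp_epar
    refine Submodule.sub_mem _ ?_ ?_
    · have := mono_lpar (n := n) ∅; simpa using this
    · rcases hε with h | h
      · rw [h, zero_smul]; exact Submodule.zero_mem _
      · apply Submodule.smul_mem
        have := mono_lpar (n := n) Finset.univ
        rw [Finset.card_univ, Fintype.card_fin, (ZMod.natCast_eq_zero_iff_even).2 h] at this
        exact this
  have := epar_mul this (pd_epar i)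
  rwa [zero_add] at this

lemma dg_sb_xg (c : Fin n → ℂ) (A : E n) (m : Fin n) :
    sbL n (dg c) A (xg m) = dg c (A (xg m)) - c m • A (xg m) := by
  rw [sb_left0 _ (dg_even c), LinearMap.sub_apply, Module.End.mul_apply, Module.End.mul_apply]
  congr 1
  rw [xg, dg_mono, map_smul, Finset.sum_singleton]

lemma vv_eig {ε : ℂ} {c : Fin n → ℂ} (h : ε = 0 ∨ ∑ i, c i = 0) (i : Fin n) :
    sbL n (dg c) (vv ε i) = (- c i) • vv ε i := by
  apply Wn_ext (Wn_sb_mem (dg_mem c) (vv_mem ε i)) (Submodule.smul_mem _ _ (vv_mem ε i))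
  intro m
  rw [dg_sb_xg, LinearMap.smul_apply, vv_xg]
  split_ifs with hi
  · subst hi
    rw [map_sub, map_smul, dg_mono, dg_mono]
    rcases h with h | h <;> rw [h] <;> simp
  · simp

lemma pd_GG (N : ℕ) (i : Fin n) : pd n i ∈ GG N (-1) := by
  intro S T h
  have := pd_mono_ne h
  rw [show (T.card : ℤ) - S.card - -1 = 0 by omega]
  exact dvd_zero _

lemma vv_GG {ε : ℂ} {N : ℕ} (h : ε = 0 ∨ N ∣ n) (i : Fin n) : vv ε i ∈ GG N (-1) := by
  rw [show (-1 : ℤ) = 0 + -1 by ring]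
  refine GG_mul ?_ (pd_GG N i)
  rw [map_sub, map_smul, mulOp_one]
  refine Submodule.sub_mem _ ?_ ?_
  · intro S T h
    have : T = S := by by_contra hc; simp [mono_apply, hc] at h
    rw [this]; simp
  · rcases h with h | h
    · rw [h, zero_smul]; exact Submodule.zero_mem _
    · apply Submodule.smul_mem
      intro S T h'
      rw [mulOp_top, Pi.smul_apply, mono_apply, mono_apply] at h'
      have h1 : S = ∅ := by by_contra hc; simp [Ne.symm hc] at h'
      have h2 : T = Finset.univ := by by_contra hc; simp [hc] at h'
      rw [h1, h2]; simp; exact_mod_cast h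

lemma trans_zero {ε : ℂ} (hε : ε = 0 ∨ Even n) {y : E n} (hy : y ∈ Wn n) {d : ℕ} (hdn : d < n)
    (hd : ∀ m S, y (xg m) S ≠ 0 → S.card = d + 1) (h : ∀ i, sbL n (vv ε i) y = 0) : y = 0 := by
  apply Wn_ext hy (Submodule.zero_mem _)
  intro m
  funext U
  rw [LinearMap.zero_apply, Pi.zero_apply]
  by_contra hne
  have hU := hd m U hne
  obtain ⟨i, hi⟩ : U.Nonempty := Finset.card_pos.1 (by omega)
  have hS : (U.erase i).card = d := by rw [Finset.card_erase_of_mem hi, hU]; rfl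
  have hSu : U.erase i ≠ Finset.univ := by
    intro hc; rw [hc, Finset.card_univ, Fintype.card_fin] at hS; omega
  have e := congrArg (fun B : E n => B (xg m) (U.erase i)) (h i)
  simp only [sb_left1 _ (vv_odd hε i), LinearMap.sub_apply, Module.End.mul_apply, Pi.sub_apply,
    LinearMap.zero_apply, Pi.zero_apply] at e
  have e1 : par n (y (par n (vv ε i (xg m)))) (U.erase i) = 0 := by
    rw [vv_xg]
    split_ifs
    · rw [map_sub, map_smul, par_mono, par_mono, map_sub, map_smul, map_smul, map_smul,
        Wn_one hy, par_apply]
      have : y (mono n Finset.univ) (U.erase i) = 0 := by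
        by_contra hc
        have := Wn_deg hy hd hc
        rw [Finset.card_univ, Fintype.card_fin] at this
        omega
      simp [this]
    · simp
  rw [e1, vv_apply, Pi.sub_apply, Pi.smul_apply, mono_apply, if_neg hSu, pd_apply,
    if_neg (by simp), Finset.insert_erase hi] at e
  simp only [smul_zero, sub_zero, mul_eq_zero] at e
  rcases e with e | e
  · exact sg_ne _ _ e
  · exact hne e

lemma trans_ind {L : Submodule ℂ (E n)} (hLW : L ≤ Wn n) (hL : ∀ A ∈ L, par n * A * par n ∈ L)
    (hcl : ∀ A ∈ L, ∀ B ∈ L, sbL n A B ∈ L) {p : ZMod 2} {D : E n →ₗ[ℂ] E n}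
    (hD : IsSuperDer n L p D) {c : Fin n → ℂ} (hc : dg c ∈ L)
    (h0 : sbL n (dg c) (D (dg c)) = 0) {N : ℕ} (hg : Gen N c) {K : ℕ} (hKn : K < n)
    (hK : ∀ d k : ℕ, d ≤ n → k ≤ K → (N : ℤ) ∣ (d : ℤ) - (k + 1) → d = k + 1)
    {ε : ℂ} (hε : ε = 0 ∨ Even n ∧ N ∣ n ∧ ∑ i, c i = 0) (hv : ∀ i, vv ε i ∈ L) {γ : ℂ}
    (hγ : p = 1 → γ = 0) (hDv : ∀ i, D (vv ε i) = γ • vv ε i)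
    (hm1 : ∀ x ∈ L, x ∈ GG N (-1) → x ∈ Submodule.span ℂ (Set.range (vv (n := n) ε))) (k : ℕ)
    (hk : k ≤ K + 1) : ∀ x ∈ L, x ∈ GG N ((k : ℤ) - 1) → ∀ l : ℂ, sbL n (dg c) x = l • x →
      D x = (- γ * ((k : ℂ) - 1)) • x := by
  have hεe : ε = 0 ∨ Even n := hε.imp id (fun h => h.1)
  induction k with
  | zero =>
    intro x hx hxG l hl
    have := hm1 x hx (by simpa using hxG)
    have h2 : Submodule.span ℂ (Set.range (vv (n := n) ε)) ≤ LinearMap.eqLocus D (γ • LinearMap.id) := by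
      rw [Submodule.span_le]
      rintro _ ⟨i, rfl⟩
      exact hDv i
    have h3 : D x = γ • x := h2 this
    rw [h3]; congr 1; push_cast; ring
  | succ k ih =>
    intro x hx hxG l hl
    by_cases hx0 : x = 0
    · rw [hx0, map_zero, smul_zero]
    have hxG' : x ∈ GG N (k : ℤ) := by push_cast at hxG; simpa using hxG
    set y := D x - (- γ * k) • x with hy
    have hDxL : D x ∈ L := der_maps hL hD hx
    have hyL : y ∈ L := L.sub_mem hDxL (L.smul_mem _ hx)
    have hyG : y ∈ GG N (k : ℤ) := Submodule.sub_mem _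
      (eig_GG hg hl (der_eig hL hD hc h0 hx hl) hx0 hxG') (Submodule.smul_mem _ _ hxG')
    have : y = 0 := by
      apply trans_zero hεe (hLW hyL) (d := k) (by omega)
      · intro m S hS
        have := hyG _ _ hS
        rw [Finset.card_singleton] at this
        apply hK _ _ (by simpa using Finset.card_le_univ S) (by omega)
        convert this using 1; push_cast; ring
      · intro i
        have e1 := der_leib hL hD (hv i) (vv_odd hεe i) hx
        have e2 := ih (by omega) (sbL n (vv ε i) x) (hcl _ (hv i) _ hx)
          (by have := GG_sb (vv_GG (N := N) (hε.imp id (fun h => h.2.1)) i) hxG'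
              rwa [show (-1 : ℤ) + k = k - 1 by ring] at this) (- c i + l)
          (by
            rw [jacobi_left (dg_even c) (vv_odd hεe i), zero_mul, sgn_zero, one_smul, hl,
              vv_eig (hε.imp id (fun h => h.2.2)), map_smul, map_smul, LinearMap.smul_apply]
            module)
        rw [e2, hDv, map_smul, LinearMap.smul_apply, mul_one] at e1
        rw [hy, map_sub, map_smul]
        rcases zmod2_cases p with rfl | rfl
        · rw [sgn_zero, one_smul] at e1
          have : sbL n (vv ε i) (D x) = (-γ * ((k:ℂ) - 1)) • sbL n (vv ε i) x
            - γ • sbL n (vv ε i) x := by rw [e1]; abel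
          rw [this]; module
        · rw [hγ rfl] at e1 ⊢
          rw [sgn_one] at e1
          have : sbL n (vv ε i) (D x) = 0 := by
            have e3 : (-1 : ℂ) • sbL n (vv ε i) (D x) = 0 := by
              have e4 := e1.symm
              rw [zero_smul, zero_add] at e4
              rw [e4]; simp
            rw [eneg_one_smul] at e3
            exact neg_eq_zero.1 e3
          rw [this]; simp
    rw [hy, sub_eq_zero] at this
    rw [this]; congr 1; push_cast; ring

lemma grade_decomp {L : Submodule ℂ (E n)} (hLW : L ≤ Wn n) {c : Fin n → ℂ}
    (hc : ∀ x ∈ L, sbL n (dg c) x ∈ L) {N : ℕ} (hg : Gen N c) {K : ℕ}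
    (hK : K + 1 = n ∨ K + 2 = n ∧ N = n)
    {P : E n → Prop} (h0 : P 0) (hadd : ∀ x y, P x → P y → P (x + y))
    (H : ∀ k : ℕ, k ≤ K + 1 → ∀ x ∈ L, x ∈ GG N ((k : ℤ) - 1) → ∀ l : ℂ,
      sbL n (dg c) x = l • x → P x) {x : E n} (hx : x ∈ L) : P x := by
  refine eig_span hc h0 hadd ?_ hx
  intro x hx l hl
  by_cases hx0 : x = 0
  · rw [hx0]; exact h0
  have : ∃ m T, x (xg m) T ≠ 0 := by
    by_contra hcon
    push Not at hcon
    exact hx0 (Wn_ext (hLW hx) (Submodule.zero_mem _) fun m => funext fun T => by rw [hcon]; rfl)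
  obtain ⟨m, T, h1⟩ := this
  have hG : x ∈ GG N ((T.card : ℤ) - 1) := by
    intro S' T' h2
    have := Gen_card hg ((eig_entry hl h2).trans (eig_entry hl h1).symm)
    simpa using this
  have hT : T.card ≤ n := by simpa using Finset.card_le_univ T
  by_cases hTk : T.card ≤ K + 1
  · exact H _ hTk x hx hG l hl
  · have hh : T.card = n ∧ N = n := by omega
    refine H 0 (by omega) x hx ?_ l hl
    intro S' T' h2
    have := hG _ _ h2
    rw [hh.1, hh.2] at this
    rw [hh.2]
    obtain ⟨q, hq⟩ := this
    exact ⟨q + 1, by push_cast; linarith⟩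

end

section

variable {n}

lemma vv_zero (i : Fin n) : vv 0 i = pd n i := by
  rw [vv, zero_smul, sub_zero, mulOp_one, one_mul]

lemma vv_sum_xg (ε : ℂ) (a : Fin n → ℂ) (m : Fin n) :
    (∑ i, a i • vv ε i) (xg m) = a m • (mono n ∅ - ε • mono n Finset.univ) := by
  simp only [LinearMap.sum_apply, LinearMap.smul_apply, vv_xg, smul_ite, smul_zero,
    Finset.sum_ite_eq', Finset.mem_univ, if_true]

lemma pd_sb_xg {p : ZMod 2} {b : E n} (hb : b ∈ Wn n) (hp : b ∈ epar n p) (j m : Fin n) :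
    sbL n (pd n j) b (xg m) = pd n j (b (xg m)) := by
  rw [sb_hom (pd_epar j) hp, LinearMap.sub_apply, LinearMap.smul_apply, Module.End.mul_apply,
    Module.End.mul_apply, pd_xg]
  split_ifs
  · rw [Wn_one hb]; simp
  · simp

lemma dg_one_xg (i : Fin n) : dg (fun _ => 1) (xg i) = xg i := by
  rw [xg, dg_mono]; simp

lemma W_case (hn : 4 ≤ n) (p : ZMod 2) (D : E n →ₗ[ℂ] E n) (hD : IsSuperDer n (Wn n) p D) :
    ∃ a ∈ Wn n, ∀ x ∈ Wn n, D x = sbL n a x := by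
  have hL : ∀ A ∈ Wn n, par n * A * par n ∈ Wn n := fun _ => Wn_conj
  have hcl : ∀ A ∈ Wn n, ∀ B ∈ Wn n, sbL n A B ∈ Wn n := fun _ hA _ hB => Wn_sb_mem hA hB
  have hc := dg_mem (n := n) (fun _ => 1)
  refine der_fix hL hcl le_rfl hD hc ?_
  intro D hD h0
  have hDL : ∀ i, D (pd n i) ∈ Wn n := fun i => der_maps hL hD (pd_mem i)
  have hDp : ∀ i, D (pd n i) ∈ epar n (1 + p) := fun i => (hD.maps 1 _ ⟨pd_mem i, pd_epar i⟩).2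
  have hdeg : ∀ i m S, D (pd n i) (xg m) S ≠ 0 → S = ∅ := by
    intro i m S hS
    have h1 := der_eig hL hD hc h0 (pd_mem i) (l := -1) (by
      have := vv_eig (ε := 0) (c := fun _ => 1) (Or.inl rfl) i
      rwa [vv_zero] at this)
    have := eig_entry h1 hS
    rw [← Finset.card_eq_zero]
    simpa using this
  have hval : ∀ i m, D (pd n i) (xg m) = D (pd n i) (xg m) ∅ • mono n ∅ := by
    intro i m; funext S
    by_cases hS : S = ∅
    · subst hS; simp [mono_apply]
    · have : D (pd n i) (xg m) S = 0 := by by_contra hc; exact hS (hdeg _ _ _ hc)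
      rw [this]; simp [mono_apply, hS]
  set b0 : E n := ∑ i, XX n i * D (pd n i) with hb0
  have hb0W : b0 ∈ Wn n := Submodule.sum_mem _ fun i _ => mulOp_mul_mem _ (hDL i)
  have hb0p : b0 ∈ epar n p := Submodule.sum_mem _ fun i _ => by
    have := epar_mul (XX_epar i) (hDp i)
    rwa [← add_assoc, show (1 : ZMod 2) + 1 = 0 from rfl, zero_add] at this
  have hbx : ∀ m, b0 (xg m) = ∑ i, D (pd n i) (xg m) ∅ • xg i := by
    intro m
    rw [hb0, LinearMap.sum_apply]
    refine Finset.sum_congr rfl fun i _ => ?_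
    rw [Module.End.mul_apply, hval, map_smul, XX_one]; simp [mono_apply]
  have hbd : ∀ j, sbL n (pd n j) b0 = D (pd n j) := by
    intro j
    apply Wn_ext (hcl _ (pd_mem j) _ hb0W) (hDL j)
    intro m
    rw [pd_sb_xg hb0W hb0p, hbx, map_sum, hval j m]
    simp only [map_smul, pd_xg]
    simp [mono_apply]
  have hbh : sbL n (dg fun _ => 1) b0 = 0 := by
    apply Wn_ext (hcl _ hc _ hb0W) (Submodule.zero_mem _)
    intro m
    rw [dg_sb_xg, hbx, map_sum]
    simp only [map_smul, dg_one_xg]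
    simp
  have hbL : sgn p • b0 ∈ Wn n := Submodule.smul_mem _ _ hb0W
  have hbp : sgn p • b0 ∈ epar n p := Submodule.smul_mem _ _ hb0p
  apply inner_of_add hbL
  have hD2 := der_add hD (ad_isder hbp fun x hx => hcl _ hbL _ hx)
  refine ⟨0, Submodule.zero_mem _, ?_⟩
  have hv : ∀ i, (D + sbL n (sgn p • b0)) (vv 0 i) = (0 : ℂ) • vv 0 i := by
    intro i
    rw [vv_zero, LinearMap.add_apply, map_smul, LinearMap.smul_apply, sb_comm hb0p (pd_epar i), hbd,
      mul_one, smul_neg, smul_smul, sgn_sq, one_smul, zero_smul]; abel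
  have hh : sbL n (dg fun _ => 1) ((D + sbL n (sgn p • b0)) (dg fun _ => 1)) = 0 := by
    rw [LinearMap.add_apply, map_add, h0, map_smul, LinearMap.smul_apply, sb_comm hb0p (dg_even _),
      hbh]
    simp
  have hg : Gen (n := n) 0 (fun _ => 1) := by
    intro m hm
    simp only [mul_one] at hm
    have : ∑ i, m i = 0 := by exact_mod_cast hm
    rw [this]; exact dvd_zero _
  intro x hx
  refine grade_decomp (P := fun x => (D + sbL n (sgn p • b0)) x = sbL n 0 x) (N := 0) (K := n - 1)
    (c := fun _ => 1) le_rfl (fun x hx => hcl _ hc _ hx) hg (Or.inl (by omega)) ?_ ?_ ?_ hx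
  · simp only [map_zero]
  · intro x y h1 h2; simp only [map_add, h1, h2]
  · intro k hk x hx hxG l hl
    have := trans_ind (K := n - 1) (ε := 0) (γ := 0) le_rfl hL hcl hD2 hc hh hg (by omega)
      (by intro d k _ _ h; rw [Nat.cast_zero, zero_dvd_iff] at h; omega) (Or.inl rfl)
      (fun i => vv_mem 0 i) (fun _ => rfl) hv ?_ k hk x hx hxG l hl
    · rw [this]; simp
    · intro y hy hyG
      have hy2 : y = ∑ i, y (xg i) ∅ • vv 0 i := by
        apply Wn_ext hy (Submodule.sum_mem _ fun i _ => Submodule.smul_mem _ _ (vv_mem 0 i))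
        intro m
        rw [vv_sum_xg]
        funext S
        by_cases hS : S = ∅
        · subst hS; simp [mono_apply]
        · have : y (xg m) S = 0 := by
            by_contra hcon
            have := hyG _ _ hcon
            rw [Nat.cast_zero, zero_dvd_iff, Finset.card_singleton] at this
            exact hS (Finset.card_eq_zero.1 (by omega))
          rw [this]
          simp [mono_apply, hS]
      rw [hy2]
      exact Submodule.sum_mem _ fun i _ => Submodule.smul_mem _ _ (Submodule.subset_span ⟨i, rfl⟩)

end

section

variable {n}

/-- uniform description of the special algebras -/
def Le (ε : ℂ) : Submodule ℂ (E n) where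
  carrier := {A | A ∈ Wn n ∧ ∀ f, A f Finset.univ + ε * A f ∅ = 0}
  add_mem' := by
    rintro A B ⟨hA, hA'⟩ ⟨hB, hB'⟩
    refine ⟨Submodule.add_mem _ hA hB, fun f => ?_⟩
    rw [LinearMap.add_apply, Pi.add_apply, Pi.add_apply]
    linear_combination hA' f + hB' f
  zero_mem' := ⟨Submodule.zero_mem _, fun f => by simp⟩
  smul_mem' := by
    rintro c A ⟨hA, hA'⟩
    refine ⟨Submodule.smul_mem _ _ hA, fun f => ?_⟩
    rw [LinearMap.smul_apply, Pi.smul_apply, Pi.smul_apply, smul_eq_mul, smul_eq_mul]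
    linear_combination c * hA' f

lemma Le_le {ε : ℂ} : Le (n := n) ε ≤ Wn n := fun _ hx => hx.1

lemma Le_conj {ε : ℂ} (hε : ε = 0 ∨ Even n) {A : E n} (hA : A ∈ Le ε) :
    par n * A * par n ∈ Le ε := by
  refine ⟨Wn_conj hA.1, fun f => ?_⟩
  rw [Module.End.mul_apply, Module.End.mul_apply, par_apply, par_apply, Finset.card_univ,
    Fintype.card_fin, Finset.card_empty]
  have := hA.2 (par n f)
  rcases hε with h | h
  · rw [h] at this ⊢; rw [zero_mul, add_zero] at this ⊢; rw [this, mul_zero]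
  · rw [msign, h.neg_one_pow]; simpa [msign] using this

lemma Le_sb {ε : ℂ} (hε : ε = 0 ∨ Even n) {A B : E n} (hA : A ∈ Le ε) (hB : B ∈ Le ε) :
    sbL n A B ∈ Le ε := by
  refine ⟨Wn_sb_mem hA.1 hB.1, fun f => ?_⟩
  have h1 := (Submodule.add_mem _ hB (Le_conj hε hB)).2
  have h2 := (Submodule.sub_mem _ hB (Le_conj hε hB)).2
  rw [sbL_apply]
  simp only [LinearMap.sub_apply, LinearMap.smul_apply, LinearMap.add_apply, Module.End.mul_apply,
    Pi.sub_apply, Pi.add_apply, Pi.smul_apply, smul_eq_mul] at h1 h2 ⊢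
  linear_combination hA.2 (B f) - (2:ℂ)⁻¹ * h1 (A f) - (2:ℂ)⁻¹ * h2 (par n (A (par n f)))

lemma pd_univ (i : Fin n) (f : Lambda n) : pd n i f Finset.univ = 0 := by
  rw [pd_apply, if_pos (Finset.mem_univ _)]

lemma Wmap_top (F : Fin n → Lambda n) (f : Lambda n) :
    Wmap n F f Finset.univ = mulOp n (par n (divMap n F)) f Finset.univ := by
  have h : ∀ i, mulOp n (F i) (pd n i f) Finset.univ
      = mulOp n (par n (pd n i (F i))) f Finset.univ := by
    intro i
    have := congrArg (fun A : E n => A f Finset.univ) (pd_mulOp i (par n (F i)))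
    simp only [Module.End.mul_apply, LinearMap.add_apply, Pi.add_apply, pd_univ,
      par_par_apply] at this
    rw [par_pd_apply, map_neg, LinearMap.neg_apply, Pi.neg_apply]
    linear_combination -this
  have e : divMap n F = ∑ i, pd n i (F i) := rfl
  rw [e, Wmap_eq]
  simp only [LinearMap.sum_apply, Module.End.mul_apply, Finset.sum_apply, map_sum, h]

lemma top_nondeg {g : Lambda n} (h : ∀ f, mulOp n g f Finset.univ = 0) : g = 0 := by
  funext S
  have := h (mono n (Finset.univ \ S))
  rw [mulOp_apply, Finset.sum_eq_single S] at this
  · rw [mono_apply, if_pos rfl, mul_one] at this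
    exact (mul_eq_zero.1 this).resolve_left (msign_ne _)
  · intro T hT hTS
    rw [mono_apply, if_neg, mul_zero]
    intro hc
    apply hTS
    have := congrArg (fun U => Finset.univ \ U) hc
    simpa using this
  · intro hS; simp at hS

lemma Sn_eq : Sn n = Le 0 := by
  apply le_antisymm
  · rintro _ ⟨F, hF, rfl⟩
    refine ⟨Wmap_mem F, fun f => ?_⟩
    rw [Wmap_top, LinearMap.mem_ker.1 hF]; simp
  · rintro A ⟨⟨F, rfl⟩, hA⟩
    refine ⟨F, ?_, rfl⟩
    apply LinearMap.mem_ker.2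
    have : par n (divMap n F) = 0 := by
      apply top_nondeg; intro f
      rw [← Wmap_top]; simpa using hA f
    rw [← par_par_apply (divMap n F), this, map_zero]

lemma Wmap_scale (F : Fin n → Lambda n) :
    Wmap n (oneMScale n F) = mulOp n (oneM n) * Wmap n F := by
  rw [Wmap_eq, Wmap_eq, Finset.mul_sum]
  refine Finset.sum_congr rfl fun i _ => ?_
  rw [← mul_assoc, ← mulOp_mul]; rfl

lemma top_ne (hn : 4 ≤ n) : (∅ : Finset (Fin n)) ≠ Finset.univ := by
  intro h
  have := congrArg Finset.card h
  simp at this; omega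

lemma oneM_apply (f : Lambda n) : mulOp n (oneM n) f = f - f ∅ • mono n Finset.univ := by
  rw [oneM, omegaTop, map_sub, LinearMap.sub_apply, mulOp_one, mulOp_top]; rfl

lemma Stn_eq (hn : 4 ≤ n) : Stn n = Le 1 := by
  apply le_antisymm
  · rintro _ ⟨F, hF, rfl⟩
    have hB : Wmap n F ∈ Le 0 := by rw [← Sn_eq]; exact ⟨F, hF, rfl⟩
    rw [LinearMap.comp_apply, Wmap_scale]
    refine ⟨mulOp_mul_mem _ hB.1, fun f => ?_⟩
    have := hB.2 f
    rw [Module.End.mul_apply, oneM_apply]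
    simp only [Pi.sub_apply, Pi.smul_apply, mono_apply, if_neg (top_ne hn), smul_eq_mul]
    simp only [if_true]
    linear_combination this
  · rintro A ⟨hA, hA'⟩
    set B := mulOp n (mono n ∅ + mono n Finset.univ) * A with hB
    have hBf : ∀ f, B f = A f + A f ∅ • mono n Finset.univ := by
      intro f
      rw [hB, Module.End.mul_apply, map_add, LinearMap.add_apply, mulOp_one, mulOp_top]; rfl
    have hBL : B ∈ Le 0 := by
      refine ⟨mulOp_mul_mem _ hA, fun f => ?_⟩
      rw [hBf]
      simp only [Pi.add_apply, Pi.smul_apply, mono_apply, if_true, smul_eq_mul]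
      linear_combination hA' f
    rw [← Sn_eq] at hBL
    obtain ⟨F, hF, hFB⟩ := hBL
    refine ⟨F, hF, ?_⟩
    rw [LinearMap.comp_apply, Wmap_scale, hFB]
    apply LinearMap.ext; intro f
    rw [Module.End.mul_apply, oneM_apply, hBf]
    simp only [Pi.add_apply, Pi.smul_apply, mono_apply, if_neg (top_ne hn)]
    simp

lemma dg_Le {ε : ℂ} {c : Fin n → ℂ} (hc : ∑ i, c i = 0) : dg c ∈ Le ε :=
  ⟨dg_mem c, fun f => by rw [dg_apply, dg_apply, hc]; simp⟩

lemma vv_Le (hn : 4 ≤ n) (ε : ℂ) (i : Fin n) : vv ε i ∈ Le ε := by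
  refine ⟨vv_mem ε i, fun f => ?_⟩
  rw [vv_apply]
  simp only [Pi.sub_apply, Pi.smul_apply, mono_apply, if_neg (top_ne hn), pd_univ, smul_eq_mul]
  simp

/-- strong genericity -/
def Gen2 (c : Fin n → ℂ) : Prop :=
  ∀ m : Fin n → ℤ, ∑ i, (m i : ℂ) * c i = 0 → ∀ i j, m i = m j

lemma Gen2_Gen {c : Fin n → ℂ} (h : Gen2 c) : Gen n c := by
  intro m hm
  rcases Nat.eq_zero_or_pos n with h0 | h0
  · subst h0; simp
  · rw [Finset.sum_congr rfl (fun i _ => h m hm i ⟨0, h0⟩)]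
    simp

lemma exists_Gen2 (hn : 4 ≤ n) : ∃ c : Fin n → ℂ, ∑ i, c i = 0 ∧ Gen2 c := by
  obtain ⟨v, hv⟩ := (Module.le_rank_iff (R := ℚ) (M := ℂ) (n := n)).1 (by
    rw [Complex.rank_rat_complex]
    exact (Cardinal.natCast_lt_aleph0).le.trans Cardinal.aleph0_le_continuum)
  refine ⟨fun i => n * v i - ∑ j, v j, ?_, ?_⟩
  · rw [Finset.sum_sub_distrib, ← Finset.mul_sum]; simp
  · intro m hm
    have key : ∀ i, (n : ℚ) * m i - ∑ j, (m j : ℚ) = 0 := by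
      apply Fintype.linearIndependent_iff.1 hv
      rw [← hm]
      simp only [sub_smul, mul_sub, Finset.sum_sub_distrib, ← Finset.smul_sum, ← Finset.sum_mul]
      congr 1
      · refine Finset.sum_congr rfl fun i _ => ?_
        rw [Rat.smul_def]; push_cast; ring
      · rw [Rat.smul_def]; push_cast; ring
    intro i j
    have h1 := key i
    have h2 := key j
    have h3 : (n : ℚ) * (m i - m j) = 0 := by linear_combination h1 - h2
    have h4 : (n : ℚ) ≠ 0 := by positivity
    have h5 := (mul_eq_zero.1 h3).resolve_left h4
    exact_mod_cast sub_eq_zero.1 h5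

lemma Gen2_entry {c : Fin n → ℂ} (h : Gen2 c) {i m : Fin n} {T : Finset (Fin n)}
    (e : ∑ j ∈ T, c j - ∑ j ∈ {m}, c j = - c i) : m = i ∧ (T = ∅ ∨ T = Finset.univ) := by
  have hs : ∀ U : Finset (Fin n), ∑ i, (if i ∈ U then (1:ℂ) else 0) * c i = ∑ i ∈ U, c i := by
    intro U; simp
  have key := h (fun j => ((if j ∈ T then 1 else 0) - (if j ∈ ({m} : Finset (Fin n)) then 1 else 0))
    + (if j ∈ ({i} : Finset (Fin n)) then 1 else 0)) (by
      push_cast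
      simp only [sub_mul, add_mul, Finset.sum_sub_distrib, Finset.sum_add_distrib, hs]
      rw [e]; simp)
  simp only [Finset.mem_singleton] at key
  have hmi : m = i := by
    by_contra hne
    have := key m i
    simp only [if_true, if_neg hne, if_neg (Ne.symm hne)] at this
    split_ifs at this <;> omega
  refine ⟨hmi, ?_⟩
  subst hmi
  by_cases hm : m ∈ T
  · right; ext j; have := key j m; simp only [hm, if_true] at this
    simp only [Finset.mem_univ, iff_true]; by_contra hj; simp [hj] at this
  · left; ext j; have := key j m; simp only [hm, if_false, if_true] at this
    simp only [Finset.notMem_empty, iff_false]; intro hj; simp [hj] at this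

lemma Le_m1 {ε : ℂ} {x : E n} (hx : x ∈ Le ε) (m : Fin n)
    (h : ∀ S, x (xg m) S ≠ 0 → S = ∅ ∨ S = Finset.univ) (hn : 4 ≤ n) :
    x (xg m) = x (xg m) ∅ • (mono n ∅ - ε • mono n Finset.univ) := by
  funext S
  simp only [Pi.smul_apply, Pi.sub_apply, mono_apply, smul_eq_mul]
  by_cases h1 : S = ∅
  · subst h1; simp [top_ne hn]
  · by_cases h2 : S = Finset.univ
    · subst h2; simp only [if_neg h1, if_true]; linear_combination hx.2 (xg m)
    · have : x (xg m) S = 0 := by by_contra hc; rcases h S hc with h | h <;> contradiction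
      rw [this, if_neg h1, if_neg h2]; simp

lemma Le_m1_span {ε : ℂ} {x : E n} (hx : x ∈ Le ε)
    (h : ∀ m S, x (xg m) S ≠ 0 → S = ∅ ∨ S = Finset.univ) (hn : 4 ≤ n) :
    x = ∑ i, x (xg i) ∅ • vv ε i := by
  apply Wn_ext hx.1 (Submodule.sum_mem _ fun i _ => Submodule.smul_mem _ _ (vv_mem ε i))
  intro m
  rw [vv_sum_xg]
  exact Le_m1 hx m (h m) hn

lemma Le_core (hn : 4 ≤ n) {ε : ℂ} (hε : ε = 0 ∨ Even n) {P : Submodule ℂ (E n)} (hLP : Le ε ≤ P)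
    {p : ZMod 2} {D : E n →ₗ[ℂ] E n} (hD : IsSuperDer n (Le ε) p D)
    (H : ∀ (c : Fin n → ℂ) (D : E n →ₗ[ℂ] E n) (γ : ℂ), ∑ i, c i = 0 → Gen n c →
      IsSuperDer n (Le ε) p D → (p = 1 → γ = 0) → (∀ i, D (vv ε i) = γ • vv ε i) →
      (∀ k : ℕ, k ≤ n - 2 + 1 → ∀ x ∈ Le ε, x ∈ GG n ((k : ℤ) - 1) → ∀ l : ℂ,
        sbL n (dg c) x = l • x → D x = (- γ * ((k : ℂ) - 1)) • x) →
      ∃ a ∈ P, ∀ x ∈ Le ε, D x = sbL n a x) : ∃ a ∈ P, ∀ x ∈ Le ε, D x = sbL n a x := by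
  obtain ⟨c, hc0, hg2⟩ := exists_Gen2 hn
  have hg := Gen2_Gen hg2
  have hL : ∀ A ∈ Le (n := n) ε, par n * A * par n ∈ Le ε := fun _ => Le_conj hε
  have hcl : ∀ A ∈ Le (n := n) ε, ∀ B ∈ Le ε, sbL n A B ∈ Le ε := fun _ hA _ hB => Le_sb hε hA hB
  have hc : dg c ∈ Le ε := dg_Le hc0
  have hnC : (n : ℂ) ≠ 0 := by
    have : n ≠ 0 := by omega
    exact_mod_cast this
  refine der_fix hL hcl hLP hD hc ?_
  intro D hD h0
  have hvL := vv_Le hn ε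
  have h1 : ∃ cc : Fin n → ℂ, (p = 1 → ∀ i, cc i = 0) ∧ ∀ i, D (vv ε i) = cc i • vv ε i := by
    have h2 : ∀ i, D (vv ε i) = D (vv ε i) (xg i) ∅ • vv ε i := by
      intro i
      have he := der_eig hL hD hc h0 (hvL i) (vv_eig (Or.inr hc0) i)
      have hDL := der_maps hL hD (hvL i)
      apply Wn_ext hDL.1 (Submodule.smul_mem _ _ (vv_mem ε i))
      intro m
      rw [LinearMap.smul_apply, vv_xg]
      split_ifs with him
      · subst him
        exact Le_m1 hDL i (fun S hS => (Gen2_entry hg2 (eig_entry he hS)).2) hn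
      · rw [smul_zero]; funext S
        by_contra hcon
        exact him (Gen2_entry hg2 (eig_entry he hcon)).1.symm
    rcases zmod2_cases p with rfl | rfl
    · exact ⟨_, by simp, h2⟩
    · refine ⟨fun _ => 0, fun _ _ => rfl, fun i => ?_⟩
      rw [zero_smul]
      have e0 := (hD.maps 1 _ ⟨hvL i, vv_odd hε i⟩).2
      have e1 : D (vv ε i) ∈ epar n 1 := by rw [h2]; exact Submodule.smul_mem _ _ (vv_odd hε i)
      exact epar_disj (by decide) e0 e1
  obtain ⟨cc, hcc1, hcc⟩ := h1
  set γ := (∑ i, cc i) / n with hγ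
  have hβ0 : ∑ i, (cc i - γ) = 0 := by
    rw [Finset.sum_sub_distrib]
    simp only [Finset.sum_const, Finset.card_univ, Fintype.card_fin, nsmul_eq_mul, hγ]
    field_simp; simp
  have hγ1 : p = 1 → γ = 0 := by
    intro hp; rw [hγ, Finset.sum_eq_zero fun i _ => hcc1 hp i, zero_div]
  set b : E n := dg (fun i => cc i - γ) with hb
  have hbL : b ∈ Le ε := dg_Le hβ0
  have hbp : b ∈ epar n p := by
    rcases zmod2_cases p with rfl | rfl
    · exact dg_even _
    · have : b = 0 := by
        rw [hb, dg]
        exact Finset.sum_eq_zero fun i _ => by rw [hcc1 rfl, hγ1 rfl, sub_zero, zero_smul]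
      rw [this]; exact Submodule.zero_mem _
  apply inner_of_add (hLP hbL)
  have hD2 := der_add hD (ad_isder hbp fun x hx => hcl _ hbL _ hx)
  have hv : ∀ i, (D + sbL n b) (vv ε i) = γ • vv ε i := by
    intro i
    rw [LinearMap.add_apply, hcc, vv_eig (Or.inr hβ0)]; module
  have hh : sbL n (dg c) ((D + sbL n b) (dg c)) = 0 := by
    rw [LinearMap.add_apply, dg_dg, add_zero, h0]
  refine H c _ γ hc0 hg hD2 hγ1 hv ?_
  refine trans_ind (K := n - 2) Le_le hL hcl hD2 hc hh hg (by omega) ?_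
    (hε.imp id fun h => ⟨h, dvd_rfl, hc0⟩) hvL hγ1 hv ?_
  · intro d k hd hk h
    obtain ⟨q, hq⟩ := h
    have hq0 : q = 0 := by
      by_contra hne
      rcases lt_or_gt_of_ne hne with h | h
      · have : (n : ℤ) * q ≤ n * (-1) := by apply mul_le_mul_of_nonneg_left <;> omega
        omega
      · have : (n : ℤ) * 1 ≤ n * q := by apply mul_le_mul_of_nonneg_left <;> omega
        omega
    rw [hq0] at hq; omega
  · intro y hy hyG
    rw [Le_m1_span hy ?_ hn]
    · exact Submodule.sum_mem _ fun i _ => Submodule.smul_mem _ _ (Submodule.subset_span ⟨i, rfl⟩)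
    · intro m S hS
      have h := hyG _ _ hS
      rw [Finset.card_singleton] at h
      have hS1 : S.card ≤ n := by simpa using Finset.card_le_univ S
      have : (n : ℤ) ∣ S.card := by simpa using h
      have h3 : n ∣ S.card := by exact_mod_cast this
      rcases Nat.eq_zero_or_pos S.card with h4 | h4
      · left; exact Finset.card_eq_zero.1 h4
      · right
        have := Nat.le_of_dvd h4 h3
        apply Finset.eq_univ_of_card; rw [Fintype.card_fin]; omega

lemma CC_eig {x : E n} (hx : x ∈ Le 0) (hn : 4 ≤ n) {k : ℕ} (hk : k ≤ n - 2 + 1)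
    (hG : x ∈ GG n ((k : ℤ) - 1)) : sbL n (CC n) x = ((k : ℂ) - 1) • x := by
  rw [CC_eq]
  apply Wn_ext (Wn_sb_mem (dg_mem _) hx.1) (Submodule.smul_mem _ _ hx.1)
  intro m
  rw [dg_sb_xg, LinearMap.smul_apply]
  funext S
  rw [Pi.sub_apply, Pi.smul_apply, Pi.smul_apply, dg_apply]
  by_cases h0 : x (xg m) S = 0
  · rw [h0]; simp
  · have h := hG _ _ h0
    rw [Finset.card_singleton] at h
    have hS1 : S.card ≤ n := by simpa using Finset.card_le_univ S
    have hSn : S.card ≠ n := by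
      intro hc
      have hu : S = Finset.univ := Finset.eq_univ_of_card _ (by rw [hc, Fintype.card_fin])
      have := hx.2 (xg m)
      rw [← hu] at this
      apply h0; simpa using this
    have : S.card = k := by
      obtain ⟨q, hq⟩ := h
      push_cast at hq
      have hq0 : q = 0 := by
        by_contra hne
        rcases lt_or_gt_of_ne hne with h | h
        · have : (n : ℤ) * q ≤ n * (-1) := by apply mul_le_mul_of_nonneg_left <;> omega
          omega
        · have : (n : ℤ) * 1 ≤ n * q := by apply mul_le_mul_of_nonneg_left <;> omega
          omega
      rw [hq0] at hq; omega
    simp [this]; ring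

lemma S_case (hn : 4 ≤ n) (p : ZMod 2) (D : E n →ₗ[ℂ] E n) (hD : IsSuperDer n (Sn n) p D) :
    ∃ a ∈ Sn n ⊔ Submodule.span ℂ {CC n}, ∀ x ∈ Sn n, D x = sbL n a x := by
  rw [Sn_eq] at hD ⊢
  refine Le_core hn (Or.inl rfl) le_sup_left hD ?_
  intro c D γ hc0 hg hD hγ hv hk
  refine ⟨(-γ) • CC n, Submodule.smul_mem _ _
    (Submodule.mem_sup_right (Submodule.subset_span rfl)), ?_⟩
  intro x hx
  refine grade_decomp (P := fun x => D x = sbL n ((-γ) • CC n) x) (N := n) (K := n - 2) (c := c)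
    Le_le (fun x hx => Le_sb (Or.inl rfl) (dg_Le hc0) hx) hg
    (Or.inr ⟨by omega, rfl⟩) ?_ ?_ ?_ hx
  · simp only [map_zero]
  · intro x y h1 h2; simp only [map_add, h1, h2]
  · intro k hk' x hx hxG l hl
    rw [hk k hk' x hx hxG l hl, map_smul, LinearMap.smul_apply, CC_eig hx hn hk' hxG, smul_smul]

lemma St_case (hn : 4 ≤ n) (hev : Even n) (p : ZMod 2) (D : E n →ₗ[ℂ] E n)
    (hD : IsSuperDer n (Stn n) p D) : ∃ a ∈ Stn n, ∀ x ∈ Stn n, D x = sbL n a x := by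
  rw [Stn_eq hn] at hD ⊢
  have hε : (1 : ℂ) = 0 ∨ Even n := Or.inr hev
  refine Le_core hn hε le_rfl hD ?_
  intro c D γ hc0 hg hD hγ hv hk
  have hγ0 : γ = 0 := by
    rcases zmod2_cases p with rfl | rfl
    · let i0 : Fin n := ⟨0, by omega⟩
      let i1 : Fin n := ⟨1, by omega⟩
      have h01 : i0 ≠ i1 := by intro h; have := congrArg Fin.val h; simp [i0, i1] at this
      set z := sbL n (vv 1 i0) (vv 1 i1) with hz
      have hvo := vv_odd (n := n) hε
      have hvL := vv_Le hn (1 : ℂ)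
      have e1 : D z = γ • z + γ • z := by
        rw [hz, der_leib (fun _ => Le_conj hε) hD (hvL i0) (hvo i0) (hvL i1), hv, hv, zero_mul,
          sgn_zero, one_smul, map_smul, map_smul, LinearMap.smul_apply]
      have hzG : z ∈ GG n (((n - 1 : ℕ) : ℤ) - 1) := by
        have := GG_sb (vv_GG (N := n) (ε := 1) (Or.inr dvd_rfl) i0)
          (vv_GG (N := n) (ε := 1) (Or.inr dvd_rfl) i1)
        intro S T h
        obtain ⟨q, hq⟩ := this S T h
        refine ⟨q - 1, ?_⟩
        have : ((n - 1 : ℕ) : ℤ) = n - 1 := by omega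
        rw [this]; linarith
      have e2 := hk (n - 1) (by omega) z (Le_sb hε (hvL _) (hvL _)) hzG (- c i0 + - c i1) (by
        rw [hz, jacobi_left (dg_even c) (hvo i0), zero_mul, sgn_zero, one_smul,
          vv_eig (Or.inr hc0), vv_eig (Or.inr hc0), map_smul, map_smul, LinearMap.smul_apply]
        module)
      have e3 : (γ * n) • z = 0 := by
        have : (γ * n) • z = (γ • z + γ • z) - (-γ * (((n - 1 : ℕ) : ℂ) - 1)) • z := by
          rw [Nat.cast_sub (by omega)]; push_cast; module
        rw [this, ← e1, ← e2]; abel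
      have hz0 : z ≠ 0 := by
        intro hc
        have := congrArg (fun A : E n => A (xg i1) (Finset.univ.erase i0)) hc
        simp only [hz, sb_left1 _ (hvo i0), LinearMap.sub_apply, Module.End.mul_apply] at this
        have h2 : par n (xg i1) = (-1 : ℂ) • xg i1 := by
          rw [xg, par_mono]; simp [msign]
        have hSu : Finset.univ.erase i0 ≠ Finset.univ := by
          intro h; have := Finset.mem_univ i0; rw [← h] at this; simp at this
        rw [vv_xg, vv_xg, if_neg h01, if_pos rfl, vv_apply] at this
        simp only [map_zero, sub_zero, one_smul, Pi.sub_apply, Pi.smul_apply, pd_apply, mono_apply,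
          if_neg hSu, smul_zero, Finset.mem_erase, ne_eq, not_true_eq_false, false_and, if_false,
          Finset.insert_erase (Finset.mem_univ i0), if_true, if_neg (Ne.symm (top_ne hn)),
          LinearMap.zero_apply, Pi.zero_apply] at this
        rcases mul_eq_zero.1 this with h | h
        · exact sg_ne _ _ h
        · norm_num at h
      rcases smul_eq_zero.1 e3 with h | h
      · rcases mul_eq_zero.1 h with h | h
        · exact h
        · exfalso; have : n ≠ 0 := by omega
          exact this (by exact_mod_cast h)
      · exact absurd h hz0
    · exact hγ rfl
  refine ⟨0, Submodule.zero_mem _, ?_⟩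
  intro x hx
  refine grade_decomp (P := fun x => D x = sbL n 0 x) (N := n) (K := n - 2) (c := c)
    Le_le (fun x hx => Le_sb hε (dg_Le hc0) hx) hg
    (Or.inr ⟨by omega, rfl⟩) ?_ ?_ ?_ hx
  · simp only [map_zero]
  · intro x y h1 h2; simp only [map_add, h1, h2]
  · intro k hk' x hx hxG l hl
    rw [hk k hk' x hx hxG l hl, hγ0]; simp

lemma CC_Le {x : E n} (hx : x ∈ Le 0) : sbL n (CC n) x ∈ Le 0 := by
  rw [CC_eq]
  refine ⟨Wn_sb_mem (dg_mem _) hx.1, fun f => ?_⟩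
  rw [sb_left0 _ (dg_even _), LinearMap.sub_apply, Module.End.mul_apply, Module.End.mul_apply,
    Pi.sub_apply, dg_apply]
  have h1 := hx.2 f
  have h2 := hx.2 (dg (fun _ => 1) f)
  rw [zero_mul, add_zero] at h1 h2
  rw [h1, h2]; simp

lemma S_case2 {a x : E n} (ha : a ∈ Sn n ⊔ Submodule.span ℂ {CC n}) (hx : x ∈ Sn n) :
    sbL n a x ∈ Sn n := by
  rw [Sn_eq] at *
  obtain ⟨s, hs, t, ht, rfl⟩ := Submodule.mem_sup.1 ha
  obtain ⟨c, rfl⟩ := Submodule.mem_span_singleton.1 ht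
  rw [map_add, LinearMap.add_apply, map_smul, LinearMap.smul_apply]
  exact Submodule.add_mem _ (Le_sb (Or.inl rfl) hs hx) (Submodule.smul_mem _ _ (CC_Le hx))

end

section

variable {n}

lemma cc_cc (i : Fin n) : cidx n (cidx n i) = i := by
  apply Fin.ext
  have := i.isLt
  simp only [cidx]
  split_ifs <;> omega

lemma cc_inj {i j : Fin n} : cidx n i = cidx n j ↔ i = j :=
  ⟨fun h => by rw [← cc_cc i, h, cc_cc], fun h => by rw [h]⟩

lemma cc_eq_comm {i j : Fin n} : cidx n i = j ↔ i = cidx n j :=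
  ⟨fun h => by rw [← h, cc_cc], fun h => by rw [h, cc_cc]⟩

lemma sum_cc {M : Type*} [AddCommMonoid M] (f : Fin n → M) : ∑ i, f (cidx n i) = ∑ i, f i :=
  Equiv.sum_comp (Function.Involutive.toPerm (cidx n) cc_cc) f

lemma DH_eq (f : Lambda n) : DHmap n f = ∑ i, mulOp n (pd n i (par n f)) * pd n (cidx n i) := rfl

lemma DH_Wmap (f : Lambda n) : DHmap n f = Wmap n (fun j => pd n (cidx n j) (par n f)) := by
  rw [DH_eq, Wmap_eq, ← sum_cc]
  simp only [cc_cc]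

lemma DH_mem (f : Lambda n) : DHmap n f ∈ Wn n := by rw [DH_Wmap]; exact Wmap_mem _

lemma DH_xg (f : Lambda n) (j : Fin n) : DHmap n f (xg j) = pd n (cidx n j) (par n f) := by
  rw [DH_Wmap, Wmap_xg]

lemma DH_conj (f : Lambda n) : par n * DHmap n f * par n = DHmap n (par n f) := by
  rw [DH_eq, DH_eq, Finset.mul_sum, Finset.sum_mul]
  refine Finset.sum_congr rfl fun i _ => ?_
  rw [conj_term, par_pd_apply, neg_neg]

lemma DH_epar {q : ZMod 2} {f : Lambda n} (hf : f ∈ lpar n q) : DHmap n f ∈ epar n q := by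
  rw [epar_iff, DH_conj, (lpar_iff _ _).1 hf, map_smul]

lemma pd_anti_apply (i j : Fin n) (f : Lambda n) : pd n i (pd n j f) = - pd n j (pd n i f) := by
  have := congrArg (fun A : E n => A f) (pd_anti i j)
  simpa using this

lemma pd_DH (s : Fin n) (f : Lambda n) :
    pd n s * DHmap n f = DHmap n (pd n s f) + DHmap n (par n f) * pd n s := by
  rw [DH_eq, DH_eq, DH_eq, Finset.mul_sum, Finset.sum_mul, ← Finset.sum_add_distrib]
  refine Finset.sum_congr rfl fun i _ => ?_
  rw [← mul_assoc, pd_mulOp, add_mul]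
  congr 1
  · rw [pd_anti_apply, par_pd_apply, map_neg, map_neg, map_neg]
  · rw [mul_assoc, pd_anti, emul_neg, ← mul_assoc, par_pd_apply, map_neg, eneg_mul, eneg_mul,
      neg_neg]

lemma mul_comm_even {f : Lambda n} (hf : par n f = f) (g : Lambda n) :
    mulOp n f g = mulOp n g f := by
  induction g using lam_induct with
  | h1 => rw [mulOp_apply_one, mulOp_one]; rfl
  | hadd g h hg hh => rw [map_add, map_add, hg, hh]; rfl
  | hsmul c g hg => rw [map_smul, map_smul, hg]; rfl
  | hX i g hg =>
    have := congrArg (fun A : E n => A g) (mulOp_comm_XX f i)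
    simp only [Module.End.mul_apply] at this
    rw [this, hf, hg, mulOp_XX]; rfl

lemma mul_comm_odd {f : Lambda n} (hf : par n f = - f) (g : Lambda n) :
    mulOp n f g = mulOp n (par n g) f := by
  induction g using lam_induct with
  | h1 => rw [mulOp_apply_one, par_one, mulOp_one]; rfl
  | hadd g h hg hh => rw [map_add, map_add, map_add, hg, hh]; rfl
  | hsmul c g hg => rw [map_smul, map_smul, map_smul, hg]; rfl
  | hX i g hg =>
    have := congrArg (fun A : E n => A g) (mulOp_comm_XX f i)
    simp only [Module.End.mul_apply] at this
    rw [this, hf, map_neg, LinearMap.neg_apply, hg, par_XX_apply, map_neg, map_neg (mulOp n), LinearMap.neg_apply, mulOp_XX]; rfl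

lemma mul_scomm {a b : ZMod 2} {f g : Lambda n} (hf : f ∈ lpar n a) (hg : g ∈ lpar n b) :
    mulOp n f g = sgn (a * b) • mulOp n g f := by
  rw [lpar_iff] at hf hg
  rcases zmod2_cases a with rfl | rfl
  · rw [sgn_zero, one_smul] at hf
    rw [mul_comm_even hf, zero_mul, sgn_zero, one_smul]
  · rw [sgn_one, neg_one_smul] at hf
    rw [mul_comm_odd hf, hg, one_mul, map_smul]; rfl

lemma pd_lpar {a : ZMod 2} {f : Lambda n} (hf : f ∈ lpar n a) (i : Fin n) :
    pd n i f ∈ lpar n (a + 1) := by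
  rw [lpar_iff] at *
  rw [par_pd_apply, hf, map_smul, sgn_add, sgn_one]; module

lemma DH_apply (f g : Lambda n) :
    DHmap n f g = ∑ i, mulOp n (pd n i (par n f)) (pd n (cidx n i) g) := by
  rw [DH_eq, LinearMap.sum_apply]; rfl

lemma DH_anti {a b : ZMod 2} {f g : Lambda n} (hf : f ∈ lpar n a) (hg : g ∈ lpar n b) :
    DHmap n f g = - (sgn (a * b) • DHmap n g f) := by
  rw [DH_apply, DH_apply, ← sum_cc (f := fun i => mulOp n (pd n i (par n g)) (pd n (cidx n i) f)),
    Finset.smul_sum, ← Finset.sum_neg_distrib]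
  refine Finset.sum_congr rfl fun i _ => ?_
  rw [cc_cc, (lpar_iff _ _).1 hf, (lpar_iff _ _).1 hg, map_smul, map_smul, map_smul, map_smul,
    LinearMap.smul_apply, LinearMap.smul_apply, mul_scomm (pd_lpar hf i) (pd_lpar hg _),
    smul_smul, smul_smul, ← neg_smul]
  congr 1
  rcases zmod2_cases a with rfl | rfl <;> rcases zmod2_cases b with rfl | rfl <;>
    simp [sgn_zero, sgn_one, show (1 : ZMod 2) + 1 = 0 from rfl]

lemma sb_DH_hom {a b : ZMod 2} {f g : Lambda n} (hf : f ∈ lpar n a) (hg : g ∈ lpar n b) :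
    sbL n (DHmap n f) (DHmap n g) = DHmap n (DHmap n f g) := by
  apply Wn_ext (Wn_sb_mem (DH_mem _) (DH_mem _)) (DH_mem _)
  intro j
  rw [DH_xg, sb_hom (DH_epar hf) (DH_epar hg), LinearMap.sub_apply, LinearMap.smul_apply,
    Module.End.mul_apply, Module.End.mul_apply, DH_xg, DH_xg]
  set s := cidx n j
  have e1 : par n (DHmap n f g) = DHmap n (par n f) (par n g) := by
    have := congrArg (fun A : E n => A (par n g)) (DH_conj f)
    simp only [Module.End.mul_apply, par_par_apply] at this
    exact this
  have e2 := congrArg (fun A : E n => A (par n g)) (pd_DH s (par n f))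
  simp only [Module.End.mul_apply, LinearMap.add_apply, par_par_apply] at e2
  have hpf : par n f ∈ lpar n a := by
    rw [(lpar_iff _ _).1 hf]; exact Submodule.smul_mem _ _ hf
  rw [e1, e2, (lpar_iff _ _).1 hg, map_smul, map_smul, map_smul, DH_anti (pd_lpar hpf s) hg, smul_neg,
    smul_smul]
  have : sgn b * sgn ((a + 1) * b) = sgn (a * b) := by
    rw [add_mul, sgn_add, one_mul]; linear_combination sgn (a * b) * sgn_sq b
  rw [this]; abel

lemma lam_hom_induct {P : Lambda n → Prop} (h0 : P 0) (hadd : ∀ f g, P f → P g → P (f + g))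
    (h : ∀ (q : ZMod 2) f, f ∈ lpar n q → P f) (f : Lambda n) : P f := by
  rw [lam_eq_sum f]
  refine Finset.sum_induction _ P hadd h0 fun S _ => ?_
  exact h _ _ (Submodule.smul_mem _ _ (mono_lpar S))

lemma sb_DH (f g : Lambda n) : sbL n (DHmap n f) (DHmap n g) = DHmap n (DHmap n f g) := by
  induction f using lam_hom_induct with
  | h0 => simp
  | hadd f f' h h' => simp only [map_add, LinearMap.add_apply, h, h']
  | h q f hf =>
    induction g using lam_hom_induct with
    | h0 => simp
    | hadd f f' h h' => simp only [map_add, h, h']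
    | h q' g hg => exact sb_DH_hom hf hg

lemma DH_Le (f : Lambda n) : DHmap n f ∈ Le 0 := by
  rw [← Sn_eq, DH_Wmap]
  refine ⟨_, LinearMap.mem_ker.2 ?_, rfl⟩
  have e : divMap n (fun j => pd n (cidx n j) (par n f)) = ∑ i, pd n i (pd n (cidx n i) (par n f)) :=
    rfl
  rw [e]
  set X := ∑ i, pd n i (pd n (cidx n i) (par n f)) with hX
  have h2 : X = -X := by
    conv_lhs => rw [hX, ← sum_cc]
    rw [hX, ← Finset.sum_neg_distrib]
    refine Finset.sum_congr rfl fun i _ => ?_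
    rw [cc_cc, pd_anti_apply]
  funext S
  have := congrFun h2 S
  rw [Pi.neg_apply] at this
  rw [Pi.zero_apply]
  linear_combination this / 2

lemma DH_top (f g : Lambda n) : DHmap n f g Finset.univ = 0 := by
  simpa using (DH_Le f).2 g

lemma Hn_mem {g : Lambda n} (h : g Finset.univ = 0) : DHmap n g ∈ Hn n :=
  ⟨g, h, rfl⟩

lemma Hn_elim {A : E n} (h : A ∈ Hn n) : ∃ g : Lambda n, g Finset.univ = 0 ∧ A = DHmap n g := by
  obtain ⟨g, hg, rfl⟩ := h
  exact ⟨g, hg, rfl⟩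

lemma CC_pd (s : Fin n) (f : Lambda n) : CC n (pd n s f) = pd n s (CC n f) - pd n s f := by
  rw [CC_eq]
  funext S
  rw [Pi.sub_apply, dg_apply, pd_apply, pd_apply, dg_apply]
  split_ifs with h
  · simp
  · rw [Finset.sum_const, Finset.sum_const, Finset.card_insert_of_notMem h]
    simp; ring

lemma CC_par (f : Lambda n) : CC n (par n f) = par n (CC n f) := by
  rw [CC_eq]
  funext S
  rw [dg_apply, par_apply, par_apply, dg_apply]; ring

lemma CC_apply (f : Lambda n) (S : Finset (Fin n)) : CC n f S = S.card * f S := by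
  rw [CC_eq, dg_apply]; simp

lemma CC_DH (g : Lambda n) : sbL n (CC n) (DHmap n g) = DHmap n (CC n g - (2 : ℂ) • g) := by
  have hC : CC n ∈ Wn n := by rw [CC_eq]; exact dg_mem _
  apply Wn_ext (Wn_sb_mem hC (DH_mem _)) (DH_mem _)
  intro j
  rw [DH_xg, CC_eq, dg_sb_xg, ← CC_eq, DH_xg, CC_pd, CC_par, map_sub, map_smul, map_sub, map_smul]
  module

lemma H_case2 {a x : E n} (ha : a ∈ HtN n ⊔ Submodule.span ℂ {CC n}) (hx : x ∈ Hn n) :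
    sbL n a x ∈ Hn n := by
  obtain ⟨s, hs, t, ht, rfl⟩ := Submodule.mem_sup.1 ha
  obtain ⟨c, rfl⟩ := Submodule.mem_span_singleton.1 ht
  obtain ⟨f, rfl⟩ := hs
  obtain ⟨g, hg, rfl⟩ := Hn_elim hx
  rw [map_add, LinearMap.add_apply, map_smul, LinearMap.smul_apply]
  refine Submodule.add_mem _ ?_ (Submodule.smul_mem _ _ ?_)
  · rw [sb_DH]; exact Hn_mem (DH_top _ _)
  · rw [CC_DH]; apply Hn_mem; rw [Pi.sub_apply, CC_apply, Pi.smul_apply, hg]; simp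

lemma Hn_conj {A : E n} (hA : A ∈ Hn n) : par n * A * par n ∈ Hn n := by
  obtain ⟨g, hg, rfl⟩ := Hn_elim hA
  rw [DH_conj]; apply Hn_mem; rw [par_apply, hg, mul_zero]

lemma Hn_le : Hn n ≤ HtN n ⊔ Submodule.span ℂ {CC n} := by
  rintro _ ⟨f, _, rfl⟩
  exact Submodule.mem_sup_left ⟨f, rfl⟩

lemma Hn_sb {A B : E n} (hA : A ∈ Hn n) (hB : B ∈ Hn n) : sbL n A B ∈ Hn n :=
  H_case2 (Hn_le hA) hB

lemma Hp_conj {A : E n} (hA : A ∈ HtN n ⊔ Submodule.span ℂ {CC n}) :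
    par n * A * par n ∈ HtN n ⊔ Submodule.span ℂ {CC n} := by
  obtain ⟨s, hs, t, ht, rfl⟩ := Submodule.mem_sup.1 hA
  obtain ⟨c, rfl⟩ := Submodule.mem_span_singleton.1 ht
  obtain ⟨f, rfl⟩ := hs
  rw [mul_add, add_mul, DH_conj, mul_smul_comm, smul_mul_assoc]
  have : par n * CC n * par n = CC n := by
    have := (epar_iff _ _).1 (dg_even (n := n) (fun _ => 1))
    rw [← CC_eq, sgn_zero, one_smul] at this; exact this
  rw [this]
  exact Submodule.add_mem _ (Submodule.mem_sup_left ⟨_, rfl⟩)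
    (Submodule.smul_mem _ _ (Submodule.mem_sup_right (Submodule.subset_span rfl)))

lemma DH_ker {g : Lambda n} (h : DHmap n g = 0) {S : Finset (Fin n)} (hS : S ≠ ∅) : g S = 0 := by
  obtain ⟨i, hi⟩ := Finset.nonempty_iff_ne_empty.2 hS
  have := DH_xg g (cidx n i)
  rw [h, cc_cc] at this
  have := congrFun this (S.erase i)
  rw [pd_apply, if_neg (by simp), Finset.insert_erase hi, par_apply] at this
  have h2 := this.symm
  rcases mul_eq_zero.1 h2 with h3 | h3
  · exact absurd h3 (sg_ne _ _)
  · exact (mul_eq_zero.1 h3).resolve_left (msign_ne _)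

lemma DH_zero {g : Lambda n} (h : ∀ S, S ≠ ∅ → g S = 0) : DHmap n g = 0 := by
  apply Wn_ext (DH_mem _) (Submodule.zero_mem _)
  intro j
  rw [DH_xg, LinearMap.zero_apply]
  funext S
  rw [pd_apply, par_apply, h _ (Finset.insert_ne_empty _ _)]; simp

/-- the quadratic Hamiltonians -/
def qq (i j : Fin n) : E n := DHmap n (XX n i (xg j))

lemma qq_even (i j : Fin n) : qq i j ∈ epar n 0 := by
  apply DH_epar
  rw [lpar_iff, sgn_zero, one_smul, par_XX_apply, xg, par_mono]
  simp [msign]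

lemma qq_eq (i j : Fin n) : qq i j = XX n j * pd n (cidx n i) - XX n i * pd n (cidx n j) := by
  have e : par n (XX n i (xg j)) = XX n i (xg j) := by
    rw [par_XX_apply, xg, par_mono]; simp [msign]
  apply Wn_ext (DH_mem _) (Submodule.sub_mem _ (term_mem _ _) (term_mem _ _))
  intro m
  show DHmap n (XX n i (xg j)) (xg m) = _
  rw [DH_xg, e, pd_XX_apply, pd_xg, LinearMap.sub_apply, Module.End.mul_apply,
    Module.End.mul_apply, pd_xg, pd_xg]
  simp only [cc_eq_comm (i := i), cc_eq_comm (i := j), eq_comm (a := cidx n m)]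
  congr 1
  all_goals (split_ifs <;> first | rfl | simp [XX_one] | exact (mulOp_apply_one _).symm)

lemma qq_apply (i j : Fin n) (f : Lambda n) :
    qq i j f = XX n j (pd n (cidx n i) f) - XX n i (pd n (cidx n j) f) := by
  rw [qq_eq]; rfl

lemma qq_mem (i j : Fin n) (hn : 4 < n) : qq i j ∈ Hn n := by
  apply Hn_mem
  rw [XX_apply, if_pos (Finset.mem_univ _), xg, mono_apply, if_neg, mul_zero]
  intro h
  have := congrArg Finset.card h
  rw [Finset.card_erase_of_mem (Finset.mem_univ _)] at this
  simp at this; omega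

lemma qq_DH (i j : Fin n) (g : Lambda n) : sbL n (qq i j) (DHmap n g) = DHmap n (qq i j g) :=
  sb_DH _ _

lemma XX_anti_apply (i j : Fin n) (f : Lambda n) : XX n i (XX n j f) = - XX n j (XX n i f) := by
  have := congrArg (fun A : E n => A f) (XX_anti i j)
  simpa using this

lemma XX_xg_anti (i j : Fin n) : XX n i (xg j) = - XX n j (xg i) := by
  rw [← XX_one, XX_anti_apply, XX_one]

lemma qq_qq (k l i j : Fin n) : sbL n (qq k l) (qq i j) =
    ((if cidx n k = i then qq l j else 0) - (if cidx n l = i then qq k j else 0))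
    + ((if cidx n k = j then qq i l else 0) - (if cidx n l = j then qq i k else 0)) := by
  rw [show qq i j = DHmap n (XX n i (xg j)) from rfl, qq_DH]
  have : qq k l (XX n i (xg j)) =
    ((if cidx n k = i then XX n l (xg j) else 0) - (if cidx n l = i then XX n k (xg j) else 0))
    + ((if cidx n k = j then XX n i (xg l) else 0) - (if cidx n l = j then XX n i (xg k) else 0)) := by
    rw [qq_apply, pd_XX_apply, pd_XX_apply, pd_xg, pd_xg, map_sub, map_sub, XX_anti_apply l i,
      XX_anti_apply k i]
    rw [apply_ite (XX n l), apply_ite (XX n k), apply_ite (XX n l), apply_ite (XX n k), XX_one,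
      XX_one, apply_ite (XX n i), apply_ite (XX n i)]
    simp only [map_zero]
    abel
  rw [this]
  simp only [map_add, map_sub, apply_ite (DHmap n), map_zero, qq]

lemma invariance (B : E n →ₗ[ℂ] E n →ₗ[ℂ] E n) (k l : Fin n) :
    ∑ i, ∑ j, (B (sbL n (qq k l) (qq i j)) (qq (cidx n j) (cidx n i))
      + B (qq i j) (sbL n (qq k l) (qq (cidx n j) (cidx n i)))) = 0 := by
  simp only [qq_qq, cc_inj]
  have hite : ∀ (P : Prop) [Decidable P] (F : E n →ₗ[ℂ] E n) (x : E n),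
      (if P then F else 0) x = if P then F x else 0 := by intros; split_ifs <;> rfl
  simp only [map_add, map_sub, LinearMap.add_apply, LinearMap.sub_apply, Finset.sum_add_distrib,
    Finset.sum_sub_distrib, apply_ite (fun A : E n => B A), apply_ite (B (qq _ _)), map_zero,
    LinearMap.zero_apply, hite]
  have h1 : ∀ (a : Fin n) (F : Fin n → Fin n → E n),
      ∑ i, ∑ j, (if a = i then F i j else 0) = ∑ j, F a j := by
    intro a F; rw [Finset.sum_comm]; simp
  have h2 : ∀ (a : Fin n) (F : Fin n → Fin n → E n),
      ∑ i, ∑ j, (if a = j then F i j else 0) = ∑ i, F i a := by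
    intro a F; simp
  simp only [h1, h2, cc_cc]
  abel

end

section

variable {n}

lemma pd_cc_sum (f : Lambda n) : ∑ i, pd n (cidx n i) (pd n i f) = 0 := by
  set X := ∑ i, pd n (cidx n i) (pd n i f) with hX
  have h2 : X = -X := by
    conv_lhs => rw [hX, ← sum_cc]
    rw [hX, ← Finset.sum_neg_distrib]
    refine Finset.sum_congr rfl fun i _ => ?_
    rw [cc_cc, pd_anti_apply]
  funext S
  have := congrFun h2 S
  rw [Pi.neg_apply] at this
  rw [Pi.zero_apply]
  linear_combination this / 2

lemma CC_sum (f : Lambda n) : CC n f = ∑ i, XX n i (pd n i f) := by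
  rw [CC, LinearMap.sum_apply]; rfl

lemma casF (f : Lambda n) : ∑ i, ∑ j, qq i j (qq (cidx n j) (cidx n i) f)
    = (2 : ℂ) • ((n : ℂ) • CC n f - CC n (CC n f)) := by
  have t1 : ∑ j, ∑ i, XX n j (pd n (cidx n i) (XX n (cidx n i) (pd n j f)))
      = (n : ℂ) • CC n f - CC n (CC n f) + CC n f := by
    have : ∀ j, ∑ i, XX n j (pd n (cidx n i) (XX n (cidx n i) (pd n j f)))
        = (n : ℂ) • XX n j (pd n j f) - XX n j (pd n j (CC n f)) + XX n j (pd n j f) := by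
      intro j
      rw [sum_cc (f := fun i => XX n j (pd n i (XX n i (pd n j f)))), ← map_sum]
      simp only [pd_XX_apply, if_true, Finset.sum_sub_distrib]
      rw [← CC_sum, CC_pd]
      simp only [map_sub, Finset.sum_const, Finset.card_univ, Fintype.card_fin, map_nsmul]
      rw [← Nat.cast_smul_eq_nsmul ℂ]
      abel
    simp only [this, Finset.sum_add_distrib, Finset.sum_sub_distrib, ← Finset.smul_sum, ← CC_sum]
  have t2 : ∑ i, ∑ j, XX n j (pd n (cidx n i) (XX n (cidx n j) (pd n i f))) = CC n f := by
    rw [Finset.sum_comm]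
    have : ∀ j, ∑ i, XX n j (pd n (cidx n i) (XX n (cidx n j) (pd n i f)))
        = XX n j (pd n j f) := by
      intro j
      simp only [pd_XX_apply, cc_inj, map_sub, Finset.sum_sub_distrib, ← map_sum, pd_cc_sum,
        map_zero, sub_zero]
      simp
    simp only [this, ← CC_sum]
  have t3 : ∑ i, ∑ j, XX n i (pd n (cidx n j) (XX n (cidx n i) (pd n j f))) = CC n f := by
    rw [Finset.sum_comm]; exact t2
  have t4 : ∑ i, ∑ j, XX n i (pd n (cidx n j) (XX n (cidx n j) (pd n i f)))
      = (n : ℂ) • CC n f - CC n (CC n f) + CC n f := t1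
  rw [Finset.sum_comm] at t1
  simp only [qq_apply, cc_cc, map_sub, Finset.sum_sub_distrib, t1, t2, t3, t4]
  module

/-- Casimir operator of the quadratic Hamiltonians -/
def Cas : E n →ₗ[ℂ] E n := ∑ i, ∑ j, sbL n (qq i j) ∘ₗ sbL n (qq (cidx n j) (cidx n i))

lemma Cas_apply (A : E n) :
    Cas A = ∑ i, ∑ j, sbL n (qq i j) (sbL n (qq (cidx n j) (cidx n i)) A) := by
  simp only [Cas, LinearMap.sum_apply, LinearMap.comp_apply]

lemma Cas_DH (g : Lambda n) :
    Cas (DHmap n g) = DHmap n ((2 : ℂ) • ((n : ℂ) • CC n g - CC n (CC n g))) := by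
  rw [Cas_apply, ← casF, map_sum]
  refine Finset.sum_congr rfl fun i _ => ?_
  rw [map_sum]
  refine Finset.sum_congr rfl fun j _ => ?_
  rw [qq_DH, qq_DH]

lemma Cas_coord (g : Lambda n) (S : Finset (Fin n)) :
    ((2 : ℂ) • ((n : ℂ) • CC n g - CC n (CC n g))) S = 2 * S.card * (n - S.card) * g S := by
  simp only [Pi.smul_apply, Pi.sub_apply, CC_apply, smul_eq_mul]; ring

lemma card_ne_of_ne_univ {S : Finset (Fin n)} (h : S ≠ Finset.univ) : (n : ℂ) - S.card ≠ 0 := by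
  intro h2
  apply h
  rw [← Finset.card_eq_iff_eq_univ, Fintype.card_fin]
  exact_mod_cast (sub_eq_zero.1 h2).symm

lemma Cas_inj {A : E n} (hA : A ∈ Hn n) (h : Cas A = 0) : A = 0 := by
  obtain ⟨g, hg, rfl⟩ := Hn_elim hA
  rw [Cas_DH] at h
  apply DH_zero
  intro S hS
  by_cases hu : S = Finset.univ
  · rw [hu, hg]
  have := DH_ker h hS
  rw [Cas_coord] at this
  have h1 := card_ne_of_ne_univ hu
  have h2 : (S.card : ℂ) ≠ 0 := by simpa using hS
  simpa [h1, h2] using this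

lemma Cas_mem (hn : 4 < n) {p : ZMod 2} {A : E n} (hA : A ∈ Hn n ⊓ epar n p) :
    Cas A ∈ Hn n ⊓ epar n p := by
  rw [Cas_apply]
  refine Submodule.sum_mem _ fun i _ => Submodule.sum_mem _ fun j _ => ⟨?_, ?_⟩
  · exact Hn_sb (qq_mem _ _ hn) (Hn_sb (qq_mem _ _ hn) hA.1)
  · have := sb_epar (qq_even i j) (sb_epar (qq_even (cidx n j) (cidx n i)) hA.2)
    rwa [zero_add, zero_add] at this

lemma surj_of_inj {V : Type*} [AddCommGroup V] [Module ℂ V] [FiniteDimensional ℂ V]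
    (f : V →ₗ[ℂ] V) (h : ∀ x, f x = 0 → x = 0) (u : V) : ∃ a, f a = u :=
  LinearMap.injective_iff_surjective.1 ((injective_iff_map_eq_zero f).2 h) u

lemma Cas_surj (hn : 4 < n) {p : ZMod 2} {u : E n} (hu : u ∈ Hn n ⊓ epar n p) :
    ∃ a ∈ Hn n ⊓ epar n p, Cas a = u := by
  let f : ↥(Hn n ⊓ epar n p) →ₗ[ℂ] ↥(Hn n ⊓ epar n p) :=
    (Cas (n := n)).restrict fun x hx => Cas_mem hn hx
  obtain ⟨a, ha⟩ := surj_of_inj (V := ↥(Hn n ⊓ epar n p)) f (fun x hx =>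
    Subtype.ext (Cas_inj x.2.1 (congrArg Subtype.val hx))) ⟨u, hu⟩
  exact ⟨a.1, a.2, congrArg Subtype.val ha⟩

lemma qq_jac (k l : Fin n) {β : ZMod 2} {B : E n} (hB : B ∈ epar n β) (C : E n) :
    sbL n (qq k l) (sbL n B C) = sbL n (sbL n (qq k l) B) C + sbL n B (sbL n (qq k l) C) := by
  rw [jacobi_left (qq_even k l) hB, zero_mul, sgn_zero, one_smul]

lemma Cas_comm (k l : Fin n) (A : E n) : sbL n (qq k l) (Cas A) = Cas (sbL n (qq k l) A) := by
  have h := invariance ((sbL n).compl₂ ((sbL n).flip A)) k l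
  simp only [LinearMap.compl₂_apply, LinearMap.flip_apply] at h
  rw [Cas_apply, Cas_apply, map_sum, ← sub_eq_zero, ← Finset.sum_sub_distrib, ← h]
  refine Finset.sum_congr rfl fun i _ => ?_
  rw [map_sum, ← Finset.sum_sub_distrib]
  refine Finset.sum_congr rfl fun j _ => ?_
  rw [qq_jac k l (qq_even i j), qq_jac k l (qq_even (cidx n j) (cidx n i)), map_add]
  abel

lemma qq_skew (k l : Fin n) (A : E n) : sbL n A (qq k l) = - sbL n (qq k l) A := by
  rw [sb_left0 _ (qq_even k l), sb_right0 _ (qq_even k l)]; abel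

lemma Hn_conj' : ∀ A ∈ Hn n, par n * A * par n ∈ Hn n := fun _ h => Hn_conj h

lemma H_step1 (hn : 4 < n) {p : ZMod 2} {D : E n →ₗ[ℂ] E n} (hD : IsSuperDer n (Hn n) p D) :
    ∃ a ∈ Hn n ⊓ epar n p, ∀ k l, (D + sbL n a) (qq k l) = 0 := by
  have hq : ∀ i j : Fin n, D (qq i j) ∈ Hn n ⊓ epar n p := by
    intro i j
    have := hD.maps 0 _ ⟨qq_mem i j hn, qq_even i j⟩
    rwa [zero_add] at this
  set u := ∑ i, ∑ j, sbL n (qq i j) (D (qq (cidx n j) (cidx n i))) with hu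
  have hum : u ∈ Hn n ⊓ epar n p := by
    refine Submodule.sum_mem _ fun i _ => Submodule.sum_mem _ fun j _ => ⟨?_, ?_⟩
    · exact Hn_sb (qq_mem _ _ hn) (hq _ _).1
    · have := sb_epar (qq_even i j) (hq (cidx n j) (cidx n i)).2
      rwa [zero_add] at this
  obtain ⟨a, ha, hau⟩ := Cas_surj hn hum
  refine ⟨a, ha, fun k l => ?_⟩
  have h := invariance ((sbL n).compl₂ D) k l
  simp only [LinearMap.compl₂_apply] at h
  have h1 : sbL n (qq k l) u = Cas (D (qq k l)) := by
    rw [hu, Cas_apply, map_sum, ← sub_eq_zero, ← Finset.sum_sub_distrib, ← h]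
    refine Finset.sum_congr rfl fun i _ => ?_
    rw [map_sum, ← Finset.sum_sub_distrib]
    refine Finset.sum_congr rfl fun j _ => ?_
    rw [qq_jac k l (qq_even i j), der_leib Hn_conj' hD (qq_mem k l hn) (qq_even k l)
      (qq_mem (cidx n j) (cidx n i) hn), mul_zero, sgn_zero, one_smul,
      qq_skew (cidx n j) (cidx n i), map_add, map_neg]
    abel
  have h2 : sbL n (qq k l) a - D (qq k l) = 0 := by
    apply Cas_inj (Submodule.sub_mem _ (Hn_sb (qq_mem k l hn) ha.1) (hq k l).1)
    rw [map_sub, ← Cas_comm, hau, h1, sub_self]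
  rw [LinearMap.add_apply, qq_skew, sub_eq_zero.1 h2]; abel

lemma D_qq (hn : 4 < n) {p : ZMod 2} {D : E n →ₗ[ℂ] E n} (hD : IsSuperDer n (Hn n) p D)
    (h0 : ∀ k l, D (qq k l) = 0) (k l : Fin n) {x : E n} (hx : x ∈ Hn n) :
    D (sbL n (qq k l) x) = sbL n (qq k l) (D x) := by
  rw [der_leib Hn_conj' hD (qq_mem k l hn) (qq_even k l) hx, h0, mul_zero, sgn_zero, one_smul]
  simp

lemma D_Cas (hn : 4 < n) {p : ZMod 2} {D : E n →ₗ[ℂ] E n} (hD : IsSuperDer n (Hn n) p D)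
    (h0 : ∀ k l, D (qq k l) = 0) {x : E n} (hx : x ∈ Hn n) : D (Cas x) = Cas (D x) := by
  simp only [Cas_apply, map_sum]
  refine Finset.sum_congr rfl fun i _ => Finset.sum_congr rfl fun j _ => ?_
  rw [D_qq hn hD h0 i j (Hn_sb (qq_mem _ _ hn) hx), D_qq hn hD h0 _ _ hx]

lemma mono_Hn {S : Finset (Fin n)} (h : S ≠ Finset.univ) : DHmap n (mono n S) ∈ Hn n := by
  apply Hn_mem; rw [mono_apply, if_neg (Ne.symm h)]

lemma CC_mono (S : Finset (Fin n)) : CC n (mono n S) = (S.card : ℂ) • mono n S := by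
  rw [CC_eq, dg_mono]; simp

lemma H_supp (hn : 4 < n) {p : ZMod 2} {D : E n →ₗ[ℂ] E n} (hD : IsSuperDer n (Hn n) p D)
    (h0 : ∀ k l, D (qq k l) = 0) {S : Finset (Fin n)} (hS : S ≠ Finset.univ) {g : Lambda n}
    (hg : D (DHmap n (mono n S)) = DHmap n g) {U : Finset (Fin n)} (hU : U ≠ ∅) (hgU : g U ≠ 0) :
    U.card = S.card ∨ U.card + S.card = n := by
  have h1 := D_Cas hn hD h0 (mono_Hn hS)
  rw [hg, Cas_DH, Cas_DH, CC_mono, map_smul (CC n), CC_mono] at h1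
  have h2 : (2 : ℂ) • ((n : ℂ) • (S.card : ℂ) • mono n S - (S.card : ℂ) • (S.card : ℂ) • mono n S)
      = (2 * S.card * (n - S.card) : ℂ) • mono n S := by module
  rw [h2, map_smul, map_smul, hg, ← map_smul, ← sub_eq_zero, ← map_sub] at h1
  have h3 := DH_ker h1 hU
  rw [Pi.sub_apply, Cas_coord, Pi.smul_apply, smul_eq_mul] at h3
  have h4 : ((U.card : ℂ) - S.card) * ((U.card : ℂ) + S.card - n) = 0 := by
    apply mul_right_cancel₀ hgU
    linear_combination h3 / 2
  rcases mul_eq_zero.1 h4 with h | h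
  · left; exact_mod_cast sub_eq_zero.1 h
  · right; exact_mod_cast sub_eq_zero.1 h

end

section

variable {n}

lemma exists_pair (hn : 4 < n) (s : Fin n) :
    ∃ a : Fin n, cidx n a ≠ a ∧ s ≠ a ∧ s ≠ cidx n a := by
  have h0 : cidx n ⟨0, by omega⟩ = ⟨n / 2, by omega⟩ := by
    apply Fin.ext; simp only [cidx]; split_ifs <;> omega
  have h1 : cidx n ⟨1, by omega⟩ = ⟨1 + n / 2, by omega⟩ := by
    apply Fin.ext; simp only [cidx]; split_ifs <;> omega
  by_cases h : s.val = 0 ∨ s.val = n / 2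
  · refine ⟨⟨1, by omega⟩, ?_, ?_, ?_⟩
    · rw [h1]; simp only [ne_eq, Fin.mk.injEq]; omega
    · simp only [ne_eq, Fin.ext_iff]; omega
    · rw [h1]; simp only [ne_eq, Fin.ext_iff]; omega
  · refine ⟨⟨0, by omega⟩, ?_, ?_, ?_⟩
    · rw [h0]; simp only [ne_eq, Fin.mk.injEq]; omega
    · simp only [ne_eq, Fin.ext_iff]; omega
    · rw [h0]; simp only [ne_eq, Fin.ext_iff]; omega

lemma XXpd_apply (i : Fin n) (f : Lambda n) (U : Finset (Fin n)) :
    XX n i (pd n i f) U = if i ∈ U then f U else 0 := by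
  rw [XX_apply]
  split_ifs with h
  · rw [pd_apply, if_neg (by simp), Finset.insert_erase h, ← mul_assoc, sg_erase_self, sg_sq, one_mul]
  · rfl

lemma xg_ne_univ (hn : 4 < n) (i : Fin n) : ({i} : Finset (Fin n)) ≠ Finset.univ := by
  intro h
  have := congrArg Finset.card h
  simp at this; omega

lemma qq_xg (a b m : Fin n) : qq a b (xg m) =
    (if cidx n a = m then xg b else 0) - (if cidx n b = m then xg a else 0) := by
  rw [qq_apply, pd_xg, pd_xg, apply_ite (XX n b), apply_ite (XX n a), XX_one, XX_one, map_zero,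
    map_zero]

lemma H_step2 (hn : 4 < n) {p : ZMod 2} {D : E n →ₗ[ℂ] E n} (hD : IsSuperDer n (Hn n) p D)
    (h0 : ∀ k l, D (qq k l) = 0) {j : Fin n} (hj : cidx n j ≠ j) :
    ∃ c d : ℂ, D (DHmap n (xg j))
      = c • DHmap n (xg j) + d • DHmap n (mono n (Finset.univ.erase (cidx n j))) := by
  have hx : DHmap n (xg j) ∈ Hn n := mono_Hn (xg_ne_univ hn j)
  obtain ⟨g, hg, hgD⟩ := Hn_elim (der_maps Hn_conj' hD hx)
  have hq := D_qq hn hD h0 j (cidx n j) hx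
  rw [qq_DH, hgD, qq_DH, qq_xg, if_neg hj, cc_cc, if_pos rfl, zero_sub, map_neg, map_neg, hgD,
    ← sub_eq_zero, ← map_neg, ← map_sub] at hq
  have hsupp : ∀ U, U ≠ ∅ → g U ≠ 0 → U = {j} ∨ U = Finset.univ.erase (cidx n j) := by
    intro U hU hgU
    have h1 := DH_ker hq hU
    rw [Pi.sub_apply, Pi.neg_apply, qq_apply, cc_cc, Pi.sub_apply, XXpd_apply, XXpd_apply] at h1
    have hm : j ∈ U ∧ cidx n j ∉ U := by
      by_cases ha : j ∈ U <;> by_cases hb : cidx n j ∈ U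
      · rw [if_pos ha, if_pos hb] at h1
        exact absurd (by linear_combination -h1) hgU
      · exact ⟨ha, hb⟩
      · rw [if_neg ha, if_pos hb] at h1
        exact absurd (by linear_combination -h1/2) hgU
      · rw [if_neg ha, if_neg hb] at h1
        exact absurd (by linear_combination -h1) hgU
    rcases H_supp hn hD h0 (xg_ne_univ hn j) hgD hU hgU with h | h
    · left
      rw [Finset.card_singleton, Finset.card_eq_one] at h
      obtain ⟨a, rfl⟩ := h
      rw [Finset.mem_singleton.1 hm.1]
    · right
      apply Finset.eq_of_subset_of_card_le
      · intro x hx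
        exact Finset.mem_erase.2 ⟨fun h => hm.2 (h ▸ hx), Finset.mem_univ _⟩
      · rw [Finset.card_erase_of_mem (Finset.mem_univ _), Finset.card_univ, Fintype.card_fin]
        rw [Finset.card_singleton] at h; omega
  have hne : ({j} : Finset (Fin n)) ≠ Finset.univ.erase (cidx n j) := by
    intro h
    have := congrArg Finset.card h
    rw [Finset.card_erase_of_mem (Finset.mem_univ _), Finset.card_univ, Fintype.card_fin,
      Finset.card_singleton] at this
    omega
  refine ⟨g {j}, g (Finset.univ.erase (cidx n j)), ?_⟩
  rw [hgD, ← sub_eq_zero, ← map_smul, ← map_smul, ← map_add, ← map_sub]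
  apply DH_zero
  intro U hU
  rw [Pi.sub_apply, Pi.add_apply, Pi.smul_apply, Pi.smul_apply, xg, mono_apply, mono_apply]
  by_cases h1 : U = {j}
  · subst h1; rw [if_pos rfl, if_neg hne]; simp
  by_cases h2 : U = Finset.univ.erase (cidx n j)
  · subst h2; rw [if_pos rfl, if_neg hne.symm]; simp
  rw [if_neg h1, if_neg h2]
  have : g U = 0 := by
    by_contra h3
    rcases hsupp U hU h3 with h | h <;> contradiction
  rw [this]; simp

lemma CC_qq (i j : Fin n) : sbL n (CC n) (qq i j) = 0 := by
  rw [show qq i j = DHmap n (XX n i (xg j)) from rfl, CC_DH]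
  have : CC n (XX n i (xg j)) - (2 : ℂ) • XX n i (xg j) = 0 := by
    by_cases h : i = j
    · rw [h, xg, XX_mono_mem _ _ (by simp)]; simp
    · rw [xg, XX_mono _ _ (by simpa using h), map_smul, CC_mono,
        Finset.card_insert_of_notMem (by simpa using h), Finset.card_singleton]
      push_cast
      module
  rw [this, map_zero]

lemma om_qq (i j : Fin n) : sbL n (DHmap n (mono n Finset.univ)) (qq i j) = 0 := by
  rw [qq_skew, qq_DH]
  have h1 : ∀ a b : Fin n, a ≠ b → XX n a (pd n b (mono n Finset.univ)) = 0 := by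
    intro a b h
    rw [pd_mono _ _ (Finset.mem_univ _), map_smul, XX_mono_mem _ _ (by simpa using h), smul_zero]
  have h2 : ∀ a : Fin n, XX n a (pd n a (mono n Finset.univ)) = mono n Finset.univ := by
    intro a
    have := XXpd_mono a (Finset.univ : Finset (Fin n))
    rw [if_pos (Finset.mem_univ _)] at this
    exact this
  have : qq i j (mono n Finset.univ) = 0 := by
    rw [qq_apply]
    by_cases h : j = cidx n i
    · subst h; rw [cc_cc, h2, h2, sub_self]
    · rw [h1 _ _ h, h1 i _ (fun h' => h (cc_eq_comm.1 h'.symm)), sub_self]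
  rw [this, map_zero, neg_zero]

lemma H_step3 (hn : 4 < n) {p : ZMod 2} {D : E n →ₗ[ℂ] E n} (hD : IsSuperDer n (Hn n) p D)
    (h0 : ∀ k l, D (qq k l) = 0) {j : Fin n} (hj : cidx n j ≠ j) :
    ∃ b ∈ HtN n ⊔ Submodule.span ℂ {CC n}, b ∈ epar n p ∧
      (∀ k l, (D + sbL n b) (qq k l) = 0) ∧ (D + sbL n b) (DHmap n (xg j)) = 0 := by
  obtain ⟨c, d, hcd⟩ := H_step2 hn hD h0 hj
  obtain ⟨s, hs0, hs⟩ : ∃ s : ℂ, s ≠ 0 ∧ DHmap n (mono n Finset.univ) (xg j)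
      = s • mono n (Finset.univ.erase (cidx n j)) := by
    refine ⟨_, ?_, by
      rw [DH_xg, par_mono, map_smul, pd_mono _ _ (Finset.mem_univ _), smul_smul]⟩
    exact mul_ne_zero (msign_ne _) (sg_ne _ _)
  set b : E n := c • CC n + (-d / s) • DHmap n (mono n Finset.univ) with hb
  have hbm : b ∈ HtN n ⊔ Submodule.span ℂ {CC n} :=
    Submodule.add_mem _
      (Submodule.smul_mem _ _ (Submodule.mem_sup_right (Submodule.subset_span rfl)))
      (Submodule.smul_mem _ _ (Submodule.mem_sup_left ⟨_, rfl⟩))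
  have hbq : ∀ k l, sbL n b (qq k l) = 0 := by
    intro k l
    rw [hb, map_add, map_smul, map_smul, LinearMap.add_apply, LinearMap.smul_apply,
      LinearMap.smul_apply, CC_qq, om_qq, smul_zero, smul_zero, add_zero]
  have hbx : sbL n b (DHmap n (xg j)) = - D (DHmap n (xg j)) := by
    have e : CC n (xg j) - (2 : ℂ) • xg j = - xg j := by
      rw [xg, CC_mono, Finset.card_singleton]; push_cast; module
    rw [hb, map_add, map_smul, map_smul, LinearMap.add_apply, LinearMap.smul_apply,
      LinearMap.smul_apply, CC_DH, sb_DH, hs, e, map_neg, map_smul, smul_smul,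
      div_mul_cancel₀ _ hs0, hcd]
    module
  have hxe : DHmap n (xg j) ∈ epar n 1 := by
    apply DH_epar
    rw [lpar_iff, xg, par_mono, Finset.card_singleton, sgn_one]; simp [msign]
  refine ⟨epj p b, epj_memSub (fun _ h => Hp_conj h) _ hbm, epj_mem _ _, fun k l => ?_, ?_⟩
  · rw [LinearMap.add_apply, h0, epj_sb _ 0 _ (qq_even k l), hbq]
    simp [epj]
  · have hDx := (hD.maps 1 _ ⟨mono_Hn (xg_ne_univ hn j), hxe⟩).2
    rw [add_comm] at hDx
    rw [LinearMap.add_apply, epj_sb _ 1 _ hxe, hbx, epj_self (Submodule.neg_mem _ hDx)]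
    abel

lemma H_step4 (hn : 4 < n) {p : ZMod 2} {D : E n →ₗ[ℂ] E n} (hD : IsSuperDer n (Hn n) p D)
    (h0 : ∀ k l, D (qq k l) = 0) {j m : Fin n} (hj : cidx n j ≠ j) (hm : m ≠ j)
    (hm' : m ≠ cidx n j) (hx : D (DHmap n (xg j)) = 0) (i : Fin n) : D (DHmap n (xg i)) = 0 := by
  have key : ∀ a b k : Fin n, D (DHmap n (xg k)) = 0 → D (DHmap n (qq a b (xg k))) = 0 := by
    intro a b k h
    rw [← qq_DH, D_qq hn hD h0 a b (mono_Hn (xg_ne_univ hn k)), h, map_zero]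
  have h1 : ∀ i, i ≠ cidx n j → D (DHmap n (xg i)) = 0 := by
    intro i hi
    have := key (cidx n j) i j hx
    rwa [qq_xg, cc_cc, if_pos rfl, if_neg (fun h => hi (cc_eq_comm.1 h)), sub_zero] at this
  by_cases hi : i = cidx n j
  · subst hi
    have := key (cidx n m) (cidx n j) m (h1 m hm')
    rwa [qq_xg, cc_cc, if_pos rfl, cc_cc, if_neg hm.symm, sub_zero] at this
  · exact h1 i hi

end

section

variable {n}

lemma DHxg_apply (i : Fin n) (f : Lambda n) : DHmap n (xg i) f = - pd n (cidx n i) f := by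
  rw [DH_apply, Finset.sum_eq_single i]
  · rw [xg, par_mono, Finset.card_singleton, map_smul, ← xg, pd_xg, if_pos rfl, map_smul, mulOp_one]
    simp [msign]
  · intro k _ hk
    rw [xg, par_mono, map_smul, ← xg, pd_xg, if_neg hk, smul_zero, map_zero]; rfl
  · intro h; exact absurd (Finset.mem_univ _) h

lemma xg_odd (i : Fin n) : DHmap n (xg i) ∈ epar n 1 := by
  apply DH_epar
  rw [lpar_iff, xg, par_mono, Finset.card_singleton, sgn_one]; simp [msign]

lemma D_linear {D : E n →ₗ[ℂ] E n} {f : Lambda n}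
    (h : ∀ S, f S ≠ 0 → D (DHmap n (mono n S)) = 0) : D (DHmap n f) = 0 := by
  rw [lam_eq_sum f, map_sum, map_sum]
  refine Finset.sum_eq_zero fun S _ => ?_
  rw [map_smul, map_smul]
  by_cases hS : f S = 0
  · rw [hS, zero_smul]
  · rw [h S hS, smul_zero]

lemma ne_univ_of_lt {S : Finset (Fin n)} (h : S.card < n) : S ≠ Finset.univ := by
  rintro rfl
  rw [Finset.card_univ, Fintype.card_fin] at h
  exact lt_irrefl _ h

lemma H_low (hn : 4 < n) {p : ZMod 2} {D : E n →ₗ[ℂ] E n} (hD : IsSuperDer n (Hn n) p D)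
    (h0 : ∀ k l, D (qq k l) = 0) (hx : ∀ i, D (DHmap n (xg i)) = 0) (d : ℕ) :
    ∀ S : Finset (Fin n), S.card = d → d < n - 1 → D (DHmap n (mono n S)) = 0 := by
  induction d with
  | zero =>
    intro S hS _
    rw [Finset.card_eq_zero] at hS
    rw [hS, DH_zero, map_zero]
    intro U hU; rw [mono_apply, if_neg hU]
  | succ d ih =>
    intro S hS hd
    rcases Nat.eq_zero_or_pos d with hd0 | hd0
    · rw [hd0, zero_add, Finset.card_eq_one] at hS
      obtain ⟨i, rfl⟩ := hS
      exact hx i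
    have hSu : S ≠ Finset.univ := ne_univ_of_lt (by omega)
    obtain ⟨g, hg, hgD⟩ := Hn_elim (der_maps Hn_conj' hD (mono_Hn hSu))
    rw [hgD]
    have hpd : ∀ s, DHmap n (pd n s g) = 0 := by
      intro s
      have h1 := der_leib Hn_conj' hD (mono_Hn (xg_ne_univ hn (cidx n s))) (xg_odd (cidx n s))
        (mono_Hn hSu)
      have h2 : D (sbL n (DHmap n (mono n {cidx n s})) (DHmap n (mono n S))) = 0 := by
        rw [sb_DH, ← xg, DHxg_apply, cc_cc]
        by_cases hs : s ∈ S
        · rw [pd_mono _ _ hs, map_neg, map_neg, map_smul, map_smul,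
            ih _ (by rw [Finset.card_erase_of_mem hs, hS]; rfl) (by omega), smul_zero, neg_zero]
        · rw [pd_mono_notMem _ _ hs]; simp
      have h3 : D (DHmap n (mono n {cidx n s})) = 0 := hx _
      rw [h2, h3, map_zero, LinearMap.zero_apply, zero_add, hgD, sb_DH, ← xg, DHxg_apply, cc_cc,
        map_neg] at h1
      have h4 := congrArg (fun A : E n => sgn (p * 1) • A) h1
      simp only [smul_smul, sgn_sq, smul_zero, one_smul] at h4
      rw [← neg_neg (DHmap n (pd n s g)), ← h4, neg_zero]
    apply DH_zero
    intro U hU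
    by_contra hgU
    have hc : U.card ≤ 1 := by
      by_contra hc
      obtain ⟨s, hs⟩ := Finset.nonempty_iff_ne_empty.2 hU
      have hne : U.erase s ≠ ∅ := by
        intro h
        have := Finset.card_erase_of_mem hs
        rw [h, Finset.card_empty] at this; omega
      have := DH_ker (hpd s) hne
      rw [pd_apply, if_neg (by simp), Finset.insert_erase hs] at this
      exact hgU ((mul_eq_zero.1 this).resolve_left (sg_ne _ _))
    have hp := Finset.card_pos.2 (Finset.nonempty_iff_ne_empty.2 hU)
    rcases H_supp hn hD h0 hSu hgD hU hgU with h | h <;> omega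

lemma H_top (hn : 4 < n) {p : ZMod 2} {D : E n →ₗ[ℂ] E n} (hD : IsSuperDer n (Hn n) p D)
    (hl : ∀ S : Finset (Fin n), S.card < n - 1 → D (DHmap n (mono n S)) = 0) (s : Fin n) :
    D (DHmap n (mono n (Finset.univ.erase s))) = 0 := by
  obtain ⟨a, ha, hsa, hsa'⟩ := exists_pair hn s
  set a' := cidx n a with ha'
  set f : Lambda n := XX n a (XX n a' (xg (cidx n s))) with hf
  set T : Finset (Fin n) := (Finset.univ.erase a).erase a' with hT
  have hTc : T.card = n - 2 := by
    rw [hT, Finset.card_erase_of_mem (by simp [ha]), Finset.card_erase_of_mem (by simp),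
      Finset.card_univ, Fintype.card_fin]; omega
  have hfo : f ∈ lpar n 1 := by
    rw [lpar_iff, hf, par_XX_apply, par_XX_apply, xg, par_mono, Finset.card_singleton, sgn_one]
    simp [msign]
  have hfs : ∀ U, f U ≠ 0 → U.card < n - 1 := by
    intro U hU
    rw [hf, XX_apply] at hU
    split_ifs at hU with h1
    · rw [XX_apply] at hU
      split_ifs at hU with h2
      · rw [xg, mono_apply] at hU
        split_ifs at hU with h3
        · have e1 := Finset.card_erase_of_mem h2
          have e2 := Finset.card_erase_of_mem h1
          rw [h3, Finset.card_singleton] at e1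
          omega
        · simp at hU
      · simp at hU
    · simp at hU
  have hDf : D (DHmap n f) = 0 := D_linear fun S hS => hl S (hfs S hS)
  have hDT : D (DHmap n (mono n T)) = 0 := hl T (by omega)
  have hfm : DHmap n f ∈ Hn n := by
    apply Hn_mem
    by_contra h
    have := hfs _ h
    rw [Finset.card_univ, Fintype.card_fin] at this; omega
  have h1 := der_leib Hn_conj' hD hfm (DH_epar hfo) (mono_Hn (ne_univ_of_lt (S := T) (by omega)))
  rw [hDf, hDT, map_zero, map_zero, LinearMap.zero_apply, smul_zero, add_zero, sb_DH] at h1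
  have hpf : par n f = - f := by
    have := (lpar_iff _ _).1 hfo
    rwa [sgn_one, neg_one_smul] at this
  have haT : pd n a (mono n T) = 0 := pd_mono_notMem _ _ (by simp [hT])
  have haT' : pd n a' (mono n T) = 0 := pd_mono_notMem _ _ (by simp [hT])
  have hpd : ∀ i, pd n i f = (if i = a then XX n a' (xg (cidx n s)) else 0)
      - ((if i = a' then XX n a (xg (cidx n s)) else 0)
        - (if i = cidx n s then XX n a (XX n a' (mono n ∅)) else 0)) := by
    intro i
    rw [hf, pd_XX_apply, pd_XX_apply, pd_xg, map_sub, apply_ite (XX n a'), apply_ite (XX n a),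
      apply_ite (XX n a)]
    simp only [map_zero]
  have hval : DHmap n f (mono n T) = - XX n a (XX n a' (pd n s (mono n T))) := by
    rw [DH_apply, Finset.sum_eq_single (cidx n s)]
    · have e1 : cidx n s ≠ a := fun h => hsa' (by rw [ha', ← h, cc_cc])
      have e2 : cidx n s ≠ a' := fun h => hsa (cc_inj.1 h)
      rw [hpf, map_neg, hpd, if_neg e1, if_neg e2, if_pos rfl, cc_cc, zero_sub, zero_sub, neg_neg,
        map_neg, mulOp_XX, mulOp_XX, mulOp_one]
      rfl
    · intro i _ hi
      by_cases e1 : i = a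
      · rw [e1, ← ha', haT', map_zero]
      by_cases e2 : i = a'
      · rw [e2, ha', cc_cc, haT, map_zero]
      rw [hpf, map_neg, hpd, if_neg e1, if_neg e2, if_neg hi]; simp
    · intro h; exact absurd (Finset.mem_univ _) h
  have hsT : s ∈ T := by simp [hT, hsa, hsa']
  have hins : insert a (insert a' (T.erase s)) = Finset.univ.erase s := by
    ext x
    simp only [hT, Finset.mem_insert, Finset.mem_erase, Finset.mem_univ, and_true]
    by_cases h1 : x = a
    · subst h1; simp [hsa.symm]
    · by_cases h2 : x = a'
      · rw [h2]; simp [hsa'.symm]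
      · simp [h1, h2]
  rw [hval, pd_mono _ _ hsT, map_smul, XX_mono a' _ (by simp [hT]), map_smul, map_smul,
    XX_mono a _ (by simp [hT, ha.symm]), hins, map_neg, map_neg, map_smul, map_smul, map_smul,
    map_smul, map_smul, map_smul, neg_eq_zero] at h1
  have h2 := (smul_eq_zero (M := E n).1 h1).resolve_left (sg_ne _ _)
  have h3 := (smul_eq_zero (M := E n).1 h2).resolve_left (sg_ne _ _)
  exact (smul_eq_zero (M := E n).1 h3).resolve_left (sg_ne _ _)

lemma H_case (hn : 4 < n) (p : ZMod 2) (D : E n →ₗ[ℂ] E n) (hD : IsSuperDer n (Hn n) p D) :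
    ∃ a ∈ HtN n ⊔ Submodule.span ℂ {CC n}, ∀ x ∈ Hn n, D x = sbL n a x := by
  obtain ⟨a, ha, haq⟩ := H_step1 hn hD
  refine inner_of_add (Hn_le ha.1) ?_
  have hD1 := der_add hD (ad_isder (L := Hn n) ha.2 fun x hx => Hn_sb ha.1 hx)
  generalize D + sbL n a = D1 at haq hD1 ⊢
  obtain ⟨j, hj, hm, hm'⟩ := exists_pair hn ⟨0, by omega⟩
  obtain ⟨b, hb, hbp, hbq, hbx⟩ := H_step3 hn hD1 haq hj
  refine inner_of_add hb ?_
  have hD2 := der_add hD1 (ad_isder (L := Hn n) hbp fun x hx => H_case2 hb hx)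
  generalize D1 + sbL n b = D2 at hbq hbx hD2 ⊢
  have hx := H_step4 hn hD2 hbq hj hm hm' hbx
  have hl : ∀ S : Finset (Fin n), S.card < n - 1 → D2 (DHmap n (mono n S)) = 0 :=
    fun S hS => H_low hn hD2 hbq hx _ S rfl hS
  refine ⟨0, Submodule.zero_mem _, fun x hx => ?_⟩
  rw [map_zero, LinearMap.zero_apply]
  obtain ⟨g, hg, rfl⟩ := Hn_elim hx
  apply D_linear
  intro S hS
  by_cases h1 : S.card < n - 1
  · exact hl S h1
  have hSu : S ≠ Finset.univ := by rintro rfl; exact hS hg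
  obtain ⟨s, hs⟩ : ∃ s, s ∉ S := by
    by_contra h
    push Not at h
    exact hSu (Finset.eq_univ_iff_forall.2 h)
  have : S = Finset.univ.erase s := by
    apply Finset.eq_of_subset_of_card_le
    · intro x hx
      exact Finset.mem_erase.2 ⟨fun h => hs (h ▸ hx), Finset.mem_univ _⟩
    · rw [Finset.card_erase_of_mem (Finset.mem_univ _), Finset.card_univ, Fintype.card_fin]
      omega
  rw [this]
  exact H_top hn hD2 hl s

end

/-- For a Cartan type Lie superalgebra `L` over `ℂ`,
`Der L = ad L'`: every homogeneous superderivation of `L` is given by the adjoint action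
of an element of the extended algebra `L'`, and conversely `ad a` for `a ∈ L'`
(homogeneous) is a superderivation of `L`. -/
theorem der_eq_ad_prime (n : ℕ) (t : CT) (ht : t.valid n) :
    (∀ (p : ZMod 2) (D : E n →ₗ[ℂ] E n), IsSuperDer n (t.algebra n) p D →
      ∃ a ∈ t.prime n, ∀ x ∈ t.algebra n, D x = sbL n a x) ∧
    (∀ a ∈ t.prime n, ∀ p : ZMod 2, a ∈ epar n p →
      IsSuperDer n (t.algebra n) p (sbL n a)) := by
  cases t with
  | W =>
    exact ⟨fun p D hD => W_case ht p D hD, fun a ha p hp =>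
      ad_isder (L := Wn n) hp fun x hx => Wn_sb_mem ha hx⟩
  | S =>
    exact ⟨fun p D hD => S_case ht p D hD, fun a ha p hp =>
      ad_isder (L := Sn n) hp fun x hx => S_case2 ha hx⟩
  | St =>
    refine ⟨fun p D hD => St_case ht.1 ht.2 p D hD, fun a ha p hp =>
      ad_isder (L := Stn n) hp fun x hx => ?_⟩
    have ha' : a ∈ Stn n := ha
    rw [Stn_eq (by have := ht.1; omega)] at *
    exact Le_sb (Or.inr ht.2) ha' hx
  | H =>
    exact ⟨fun p D hD => H_case ht p D hD, fun a ha p hp =>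
      ad_isder (L := Hn n) hp fun x hx => H_case2 ha hx⟩

end CartanSuper
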